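/- Let q > 1 and α ∈ ℝ satisfy 1/q + (α−1)/n > 0. If p ≥ 2, r > 1 and 2/p = 1/q + 1/r, then there exists a constant c > 0 independent of u such that for every u ∈ C₀^∞(ℝⁿ): ( ∫_{ℝⁿ} |∇u(x)|^p·|x|^α dx )^{2/p} ≤ c·( ∫_{ℝⁿ} |∇⁽²⁾u(x)|^q·|x|^α dx )^{1/q}·( ∫_{ℝⁿ} |u(x)|^r·|x|^α dx )^{1/r}. -/

import Mathlib

/-!
The inequality is proved with the nonlinear field `V = |∇u|^(p-2) ∇u`, which is of class `C¹`
because `p ≥ 2`, satisfies `⟨∇u, V⟩ = |∇u|^p` and `|DV| ≤ (p-1) |∇u|^(p-2) |∇²u|`. Once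
`∫ |∇u|^p |x|^α` is bounded by a multiple of `∫ |u| |∇²u| |∇u|^(p-2) |x|^α`, Hölder's inequality
with exponents `q`, `r`, `p/(p-2)` (`holder3`) and cancellation of a power (`absorb`) finish the
proof.

For `n ≥ 2` the hypothesis gives `n + α - 1 > 0`. The divergence of
`u |x|^α V - β u |x|^(α-2) ⟨V, x⟩ x` contains the term
`(α - β (n + α - 1)) u |x|^(α-2) ⟨V, x⟩`, in which the weight is more singular than allowed; it
disappears for `β = α / (n + α - 1)`. This replaces Hardy's inequality. Since `⟨∇u, x⟩ ⟨V, x⟩`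
lies between `0` and `|∇u|^p |x|²`, the leading terms are at least
`(1 - max β 0) |∇u|^p |x|^α`, and `β < 1` exactly because `n > 1` (`identity_zero`, `energy`,
`case_two`). The identity is justified by replacing `|x|²` with `|x|² + ε` and letting `ε → 0`.

For `n = 1` one has `β = 1` and the argument degenerates, but then `α > 1 - 1/q > 0`. The
unweighted inequality holds on a half-line even without boundary conditions (`half_line`): the
boundary term of the integration by parts is cancelled by that of the companion function
`3 g(x) - 2 g(2x)`. Writing `x^α = ∫_0^x α t^(α-1) dt` (`layer_cake`), applying the unweighted
inequality on every `(t, ∞)` and Hölder's inequality in `t` gives the weighted inequality on each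
half-line, hence on the line. For `n = 0` the gradient vanishes.
-/

open MeasureTheory Filter Set

noncomputable section

/-- `E n` is the Euclidean space `ℝⁿ`. -/
abbrev E (n : ℕ) := EuclideanSpace ℝ (Fin n)

/-- An `N`-function: a continuous convex function `M : [0,∞) → [0,∞)` with `M(0) = 0`,
`lim_{λ→0} M(λ)/λ = 0` and `lim_{λ→∞} λ/M(λ) = 0`. -/
def IsNFunction (M : ℝ → ℝ) : Prop :=
  ContinuousOn M (Ici 0) ∧ ConvexOn ℝ (Ici 0) M ∧ M 0 = 0 ∧
  (∀ x ≥ (0:ℝ), 0 ≤ M x) ∧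
  Tendsto (fun l => M l / l) (nhdsWithin 0 (Ioi 0)) (nhds 0) ∧
  Tendsto (fun l => l / M l) atTop (nhds 0)

/-- The Δ₂-condition. -/
def Delta2 (M : ℝ → ℝ) : Prop := ∃ c > 0, ∀ l > (0:ℝ), M (2 * l) ≤ c * M l

/-- Condition (M): `M` is an `N`-function of class `C¹` on `(0,∞)` satisfying the
Δ₂-condition and such that `M'(λ)/λ` is bounded near zero. -/
def CondM (M : ℝ → ℝ) : Prop :=
  IsNFunction M ∧ ContDiffOn ℝ 1 M (Ioi 0) ∧ Delta2 M ∧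
  ∃ ε > (0:ℝ), ∃ C : ℝ, ∀ l ∈ Ioo (0:ℝ) ε, deriv M l / l ≤ C

/-- Condition (Y): `P, Q` are nonnegative nondecreasing measurable functions vanishing at `0`
such that the Young-type inequality `(M(u)/u²)·v·w ≤ M(u) + P(v) + Q(w)` holds. -/
def CondY (M P Q : ℝ → ℝ) : Prop :=
  Measurable P ∧ Measurable Q ∧ (∀ x ≥ (0:ℝ), 0 ≤ P x) ∧ (∀ x ≥ (0:ℝ), 0 ≤ Q x) ∧
  MonotoneOn P (Ici 0) ∧ MonotoneOn Q (Ici 0) ∧ P 0 = 0 ∧ Q 0 = 0 ∧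
  ∀ u > (0:ℝ), ∀ v > (0:ℝ), ∀ w > (0:ℝ), M u / u ^ 2 * v * w ≤ M u + P v + Q w

/-- `φ` is locally Lipschitz on `Ω`. -/
def LocLipschitzOn {α : Type*} [MetricSpace α] (Ω : Set α) (φ : α → ℝ) : Prop :=
  ∀ x ∈ Ω, ∃ s ∈ nhdsWithin x Ω, ∃ K : NNReal, LipschitzOnWith K φ s

/-- The measure `μ(dx) = e^{-φ(x)} dx` on the domain `Ω`. -/
def measOf {n : ℕ} (Ω : Set (E n)) (φ : E n → ℝ) : Measure (E n) :=
  (volume.restrict Ω).withDensity fun x => ENNReal.ofReal (Real.exp (-φ x))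

/-- `u ∈ C₀^∞(Ω)`: smooth and compactly supported inside `Ω`. -/
def TestFun {n : ℕ} (Ω : Set (E n)) (u : E n → ℝ) : Prop :=
  ContDiff ℝ (⊤ : ℕ∞) u ∧ HasCompactSupport u ∧ tsupport u ⊆ Ω

/-- The Hilbert–Schmidt norm of the Hessian of `u` at `x`. -/
def hessNormHS {n : ℕ} (u : E n → ℝ) (x : E n) : ℝ :=
  Real.sqrt (∑ i : Fin n, ∑ j : Fin n,
    (iteratedFDeriv ℝ 2 u x ![EuclideanSpace.single i (1:ℝ), EuclideanSpace.single j (1:ℝ)]) ^ 2)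

/-- The Luxemburg norm `‖f‖_{L^R(μ)} = inf {K > 0 : ∫ R(|f|/K) dμ ≤ 1}`. -/
def luxNorm {α : Type*} [MeasurableSpace α] (R : ℝ → ℝ) (μ : Measure α) (f : α → ℝ) : ℝ :=
  sInf {K : ℝ | 0 < K ∧ ∫ x, R (|f x| / K) ∂μ ≤ 1}

/-- `δ(x) = dist(x, ∂Ω)`, the distance from `x` to the boundary of `Ω`. -/
def distBdry {n : ℕ} (Ω : Set (E n)) (x : E n) : ℝ := Metric.infDist x (frontier Ω)

/-! ### The vector field `ξ ↦ ‖ξ‖^(p-2) ξ` -/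

section Phi

variable {F : Type*} [NormedAddCommGroup F] [InnerProductSpace ℝ F]

/-- The nonlinear field `ξ ↦ ‖ξ‖^(p-2) ξ` of the `p`-Laplacian. -/
def phi (p : ℝ) (ξ : F) : F := ‖ξ‖ ^ (p - 2) • ξ

lemma norm_phi {p : ℝ} (hp : 2 ≤ p) (ξ : F) : ‖phi p ξ‖ = ‖ξ‖ ^ (p - 1) := by
  rw [phi, norm_smul, Real.norm_of_nonneg (by positivity),
    ← Real.rpow_add_one' (norm_nonneg _) (by linarith)]
  ring_nf

lemma inner_phi {p : ℝ} (hp : 2 ≤ p) (ξ : F) : inner ℝ ξ (phi p ξ) = ‖ξ‖ ^ p := by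
  rw [phi, inner_smul_right, real_inner_self_eq_norm_sq, ← Real.rpow_natCast,
    ← Real.rpow_add' (norm_nonneg _) (by push_cast; linarith)]
  push_cast; ring_nf

lemma hasFDerivAt_phi {p : ℝ} (hp : 2 ≤ p) (ξ : F) :
    ∃ L : F →L[ℝ] F, HasFDerivAt (phi p) L ξ ∧ ‖L‖ ≤ (p - 1) * ‖ξ‖ ^ (p - 2) := by
  rcases hp.eq_or_lt with rfl | hp
  · refine ⟨ContinuousLinearMap.id ℝ F, ?_, ?_⟩
    · have : (phi 2 : F → F) = id := by ext; simp [phi]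
      rw [this]; exact hasFDerivAt_id ξ
    · norm_num
      exact ContinuousLinearMap.norm_id_le
  by_cases hξ : ξ = 0
  · subst hξ
    refine ⟨0, ?_, by rw [norm_zero]; exact mul_nonneg (by linarith) (by positivity)⟩
    refine .of_isLittleO ?_
    have h0 : (fun x : F => ‖x‖ ^ (p - 2)) =o[nhds 0] (fun _ : F => (1 : ℝ)) := by
      refine (Asymptotics.isLittleO_const_iff (by simp)).mpr ?_
      have := (continuousAt_id (x := (0 : F))).norm.rpow_const (p := p - 2) (.inr (by linarith))
      simpa [ContinuousAt, Real.zero_rpow (sub_ne_zero.2 hp.ne')] using this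
    have := h0.smul_isBigO (Asymptotics.isBigO_refl (fun x : F => x) (nhds 0))
    simpa [phi] using this
  · have h1 : HasFDerivAt (fun x : F => ‖x‖ ^ (p - 2))
        (((p - 2) * ‖ξ‖ ^ (p - 4)) • innerSL ℝ ξ) ξ := by
      apply HasStrictFDerivAt.hasFDerivAt
      convert! (hasStrictFDerivAt_norm_sq ξ).rpow_const (p := (p - 2) / 2) (by simp [hξ]) using 0
      simp_rw [← Real.rpow_natCast_mul (norm_nonneg _), ← Nat.cast_smul_eq_nsmul ℝ, smul_smul]
      ring_nf
    have h2 := h1.smul (hasFDerivAt_id ξ)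
    refine ⟨_, h2, ?_⟩
    have hpos : 0 < ‖ξ‖ := norm_pos_iff.2 hξ
    have e : ‖ξ‖ ^ (p - 4) * (‖ξ‖ * ‖ξ‖) = ‖ξ‖ ^ (p - 2) := by
      rw [← sq, ← Real.rpow_natCast, ← Real.rpow_add hpos]; push_cast; ring_nf
    calc _ ≤ ‖ξ‖ ^ (p - 2) * 1 + (p - 2) * ‖ξ‖ ^ (p - 4) * ‖ξ‖ * ‖ξ‖ := by
          refine (norm_add_le _ _).trans ?_
          gcongr
          · rw [norm_smul, Real.norm_of_nonneg (by positivity)]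
            gcongr
            exact ContinuousLinearMap.norm_id_le
          · rw [ContinuousLinearMap.norm_smulRight_apply, norm_smul, innerSL_apply_norm,
              Real.norm_of_nonneg (mul_nonneg (by linarith) (by positivity))]
            simp
      _ = (p - 1) * ‖ξ‖ ^ (p - 2) := by rw [← e]; ring

lemma norm_fderiv_phi_le {p : ℝ} (hp : 2 ≤ p) (ξ : F) :
    ‖fderiv ℝ (phi p) ξ‖ ≤ (p - 1) * ‖ξ‖ ^ (p - 2) := by
  obtain ⟨L, hL, hb⟩ := hasFDerivAt_phi hp ξ
  rwa [hL.fderiv]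

lemma contDiff_phi {p : ℝ} (hp : 2 ≤ p) : ContDiff ℝ 1 (phi p : F → F) := by
  rcases hp.eq_or_lt with rfl | hp'
  · have : (phi 2 : F → F) = id := by ext; simp [phi]
    rw [this]; exact contDiff_id
  rw [contDiff_one_iff_fderiv]
  refine ⟨fun x => (hasFDerivAt_phi hp x).choose_spec.1.differentiableAt, ?_⟩
  rw [continuous_iff_continuousAt]
  intro x
  by_cases hx : x = 0
  · subst hx
    have hz : ∀ ξ : F, ‖fderiv ℝ (phi p) ξ‖ ≤ (p - 1) * ‖ξ‖ ^ (p - 2) := norm_fderiv_phi_le hp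
    have h0 : Tendsto (fun ξ : F => (p - 1) * ‖ξ‖ ^ (p - 2)) (nhds 0) (nhds 0) := by
      have := ((continuousAt_id (x := (0 : F))).norm.rpow_const (p := p - 2)
        (.inr (by linarith))).const_mul (p - 1)
      simpa [ContinuousAt, Real.zero_rpow (sub_ne_zero.2 hp'.ne')] using this
    have e : fderiv ℝ (phi p) (0 : F) = 0 := by
      have := hz 0
      rw [norm_zero, Real.zero_rpow (by linarith), mul_zero] at this
      exact norm_le_zero_iff.1 this
    rw [ContinuousAt, e]
    exact squeeze_zero_norm hz h0
  · have : ContDiffAt ℝ 1 (phi p : F → F) x := by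
      unfold phi
      refine ContDiffAt.smul ?_ contDiffAt_id
      exact (contDiffAt_id.norm ℝ hx).rpow_const_of_ne (norm_ne_zero_iff.2 hx)
    exact (this.fderiv_right (m := 0) (by norm_num)).continuousAt

end Phi

/-! ### Hölder's inequality with three factors -/

lemma holder3 {X : Type*} [MeasurableSpace X] {μ : Measure X} {f g h : X → ℝ}
    (hf : Integrable f μ) (hg : Integrable g μ) (hh : Integrable h μ)
    (hf0 : ∀ x, 0 ≤ f x) (hg0 : ∀ x, 0 ≤ g x) (hh0 : ∀ x, 0 ≤ h x)
    {a b c : ℝ} (ha : 0 ≤ a) (hb : 0 ≤ b) (hc : 0 ≤ c) (habc : a + b + c = 1) :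
    Integrable (fun x => f x ^ a * g x ^ b * h x ^ c) μ ∧
    ∫ x, f x ^ a * g x ^ b * h x ^ c ∂μ ≤
      (∫ x, f x ∂μ) ^ a * (∫ x, g x ∂μ) ^ b * (∫ x, h x ∂μ) ^ c := by
  have key := ENNReal.lintegral_prod_norm_pow_le (μ := μ) (Finset.univ : Finset (Fin 3))
    (f := ![fun x => ENNReal.ofReal (f x), fun x => ENNReal.ofReal (g x),
      fun x => ENNReal.ofReal (h x)])
    (by
      intro i _
      fin_cases i
      · exact hf.aemeasurable.ennreal_ofReal
      · exact hg.aemeasurable.ennreal_ofReal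
      · exact hh.aemeasurable.ennreal_ofReal)
    (p := ![a, b, c]) (by simpa [Fin.sum_univ_three] using habc)
    (by intro i _; fin_cases i <;> simpa)
  simp only [Fin.prod_univ_three, Matrix.cons_val_zero, Matrix.cons_val_one, Matrix.cons_val] at key
  have e1 : ∀ x, ENNReal.ofReal (f x) ^ a * ENNReal.ofReal (g x) ^ b * ENNReal.ofReal (h x) ^ c
      = ENNReal.ofReal (f x ^ a * g x ^ b * h x ^ c) := by
    intro x
    have := hf0 x; have := hg0 x; have := hh0 x
    rw [ENNReal.ofReal_mul (by positivity), ENNReal.ofReal_mul (by positivity),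
      ENNReal.ofReal_rpow_of_nonneg (hf0 x) ha, ENNReal.ofReal_rpow_of_nonneg (hg0 x) hb,
      ENNReal.ofReal_rpow_of_nonneg (hh0 x) hc]
  have If := integral_nonneg (μ := μ) (f := f) hf0
  have Ig := integral_nonneg (μ := μ) (f := g) hg0
  have Ih := integral_nonneg (μ := μ) (f := h) hh0
  have e2 : (∫⁻ x, ENNReal.ofReal (f x) ∂μ) ^ a * (∫⁻ x, ENNReal.ofReal (g x) ∂μ) ^ b *
      (∫⁻ x, ENNReal.ofReal (h x) ∂μ) ^ c =
      ENNReal.ofReal ((∫ x, f x ∂μ) ^ a * (∫ x, g x ∂μ) ^ b * (∫ x, h x ∂μ) ^ c) := by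
    rw [← ofReal_integral_eq_lintegral_ofReal hf (ae_of_all _ hf0),
      ← ofReal_integral_eq_lintegral_ofReal hg (ae_of_all _ hg0),
      ← ofReal_integral_eq_lintegral_ofReal hh (ae_of_all _ hh0),
      ENNReal.ofReal_mul (by positivity), ENNReal.ofReal_mul (by positivity),
      ENNReal.ofReal_rpow_of_nonneg If ha, ENNReal.ofReal_rpow_of_nonneg Ig hb,
      ENNReal.ofReal_rpow_of_nonneg Ih hc]
  simp_rw [e1] at key
  rw [e2] at key
  have hm : AEStronglyMeasurable (fun x => f x ^ a * g x ^ b * h x ^ c) μ :=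
    (((hf.aemeasurable.pow_const a).mul (hg.aemeasurable.pow_const b)).mul
      (hh.aemeasurable.pow_const c)).aestronglyMeasurable
  have hn : ∀ x, 0 ≤ f x ^ a * g x ^ b * h x ^ c := by
    intro x
    have := hf0 x; have := hg0 x; have := hh0 x
    positivity
  refine ⟨⟨hm, ?_⟩, ?_⟩
  · rw [hasFiniteIntegral_iff_ofReal (ae_of_all _ hn)]
    exact key.trans_lt ENNReal.ofReal_lt_top
  · rw [integral_eq_lintegral_of_nonneg_ae (ae_of_all _ hn) hm]
    exact ENNReal.toReal_le_of_le_ofReal (by positivity) key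

/-- Cancelling the power `I^((p-2)/p)` in the inequality produced by Hölder's inequality. -/
lemma absorb {I D p : ℝ} (hp : 2 ≤ p) (hI : 0 ≤ I) (hD : 0 ≤ D)
    (h : I ≤ D * I ^ ((p - 2) / p)) : I ^ (2 / p) ≤ D := by
  rcases hI.eq_or_lt with rfl | hI
  · rwa [Real.zero_rpow (by positivity)]
  · have e : I = I ^ (2 / p) * I ^ ((p - 2) / p) := by
      rw [← Real.rpow_add hI]
      have : 2 / p + (p - 2) / p = 1 := by field_simp; ring
      rw [this, Real.rpow_one]
    have hpos : 0 < I ^ ((p - 2) / p) := Real.rpow_pos_of_pos hI _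
    exact le_of_mul_le_mul_right (by rw [← e]; exact h) hpos

/-! ### The integral identity for power weights -/

/-- The divergence theorem for compactly supported `C¹` fields on `ℝⁿ`. -/
lemma integral_trace_eq_zero {n : ℕ} {Y : E n → E n} (hY : ContDiff ℝ 1 Y)
    (hc : HasCompactSupport Y) :
    ∫ x, ∑ i, (fderiv ℝ Y x (EuclideanSpace.single i 1)) i = 0 := by
  have hcont : Continuous (fderiv ℝ Y) := hY.continuous_fderiv one_ne_zero
  have hci : ∀ i, Integrable (fun x => (fderiv ℝ Y x (EuclideanSpace.single i 1)) i) := by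
    intro i
    refine Continuous.integrable_of_hasCompactSupport (by fun_prop) ?_
    exact (hc.fderiv (𝕜 := ℝ)).comp_left
      (g := fun L : E n →L[ℝ] E n => (L (EuclideanSpace.single i 1)) i) (by simp)
  rw [integral_finsetSum _ fun i _ => hci i]
  refine Finset.sum_eq_zero fun i _ => ?_
  have hd : ∀ x, HasFDerivAt (fun x => Y x i)
      ((EuclideanSpace.proj i : E n →L[ℝ] ℝ).comp (fderiv ℝ Y x)) x := fun x =>
    (EuclideanSpace.proj i : E n →L[ℝ] ℝ).hasFDerivAt.comp x
      (hY.differentiable one_ne_zero x).hasFDerivAt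
  have hYi : Integrable (fun x => Y x i) :=
    Continuous.integrable_of_hasCompactSupport (by have := hY.continuous; fun_prop)
      (hc.comp_left (g := fun y : E n => y i) (by simp))
  have := integral_bilinear_hasFDerivAt_right_eq_neg_left_of_integrable (μ := volume)
    (f := fun _ : E n => (1 : ℝ)) (f' := fun _ => 0) (g := fun x => Y x i)
    (g' := fun x => (EuclideanSpace.proj i : E n →L[ℝ] ℝ).comp (fderiv ℝ Y x))
    (v := EuclideanSpace.single i 1) (B := ContinuousLinearMap.mul ℝ ℝ)
    (by simp) (by simpa using hci i) (by simpa using hYi)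
    (fun x _ => hasFDerivAt_const _ _) (fun x _ => hd x)
  simpa using this

/-- The trace of `L`, as the sum of its diagonal entries. -/
def tr {n : ℕ} (L : E n →L[ℝ] E n) : ℝ := ∑ i, (L (EuclideanSpace.single i 1)) i

lemma tr_smulRight {n : ℕ} (f : E n →L[ℝ] ℝ) (v : E n) : tr (f.smulRight v) = f v := by
  have : v = ∑ i, v i • EuclideanSpace.single i (1 : ℝ) := by
    ext j; simp [Finset.sum_apply, Pi.single_apply]
  conv_rhs => rw [this, map_sum]
  simp [tr, mul_comm]

lemma tr_add {n : ℕ} (L M : E n →L[ℝ] E n) : tr (L + M) = tr L + tr M := by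
  simp [tr, Finset.sum_add_distrib]

lemma tr_smul {n : ℕ} (c : ℝ) (L : E n →L[ℝ] E n) : tr (c • L) = c * tr L := by
  simp [tr, Finset.mul_sum]

lemma tr_id {n : ℕ} : tr (ContinuousLinearMap.id ℝ (E n)) = n := by
  simp [tr]

lemma abs_tr_le {n : ℕ} (L : E n →L[ℝ] E n) : |tr L| ≤ n * ‖L‖ := by
  refine (Finset.abs_sum_le_sum_abs _ _).trans ?_
  refine (Finset.sum_le_card_nsmul _ _ ‖L‖ fun i _ => ?_).trans (by simp)
  calc |(L (EuclideanSpace.single i 1)) i| ≤ ‖L (EuclideanSpace.single i 1)‖ := by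
        simpa using PiLp.norm_apply_le (L (EuclideanSpace.single i 1)) i
    _ ≤ ‖L‖ * ‖(EuclideanSpace.single i (1 : ℝ) : E n)‖ := L.le_opNorm _
    _ = ‖L‖ := by simp

lemma continuous_tr {n : ℕ} : Continuous (tr : (E n →L[ℝ] E n) → ℝ) := by
  unfold tr; fun_prop

lemma hasFDerivAt_reg {n : ℕ} {ε : ℝ} (hε : 0 < ε) (γ : ℝ) (x : E n) :
    HasFDerivAt (fun x : E n => (‖x‖ ^ 2 + ε) ^ γ)
      ((2 * γ * (‖x‖ ^ 2 + ε) ^ (γ - 1)) • innerSL ℝ x) x := by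
  have h := ((hasStrictFDerivAt_norm_sq x).hasFDerivAt.add_const ε).rpow_const (p := γ)
    (Or.inl (by positivity))
  convert! h using 1
  ext y
  simp
  ring

lemma contDiff_reg {n : ℕ} {ε : ℝ} (hε : 0 < ε) (γ : ℝ) :
    ContDiff ℝ 1 (fun x : E n => (‖x‖ ^ 2 + ε) ^ γ) :=
  ((contDiff_norm_sq ℝ).add contDiff_const).rpow_const_of_ne fun x => by positivity

/-- The divergence theorem for the field
`u ω V - β u σ ⟨V, x⟩ x` with `ω = (|x|² + ε)^(α/2)` and `σ = (|x|² + ε)^(α/2-1)`. The choice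
`β = α / (n + α - 1)` makes all terms containing `u ⟨V, x⟩` cancel, up to an error carrying
a factor `ε`. -/
lemma identity_eps {n : ℕ} {u : E n → ℝ} {V : E n → E n} (hu : ContDiff ℝ 1 u)
    (hV : ContDiff ℝ 1 V) (hc : HasCompactSupport u) {α β ε : ℝ} (hε : 0 < ε)
    (hβ : β * (n + α - 1) = α) :
    ∫ x, ((fderiv ℝ u x (V x) + u x * tr (fderiv ℝ V x)) * (‖x‖ ^ 2 + ε) ^ (α / 2)
      - β * (fderiv ℝ u x x * inner ℝ (V x) x + u x * inner ℝ (fderiv ℝ V x x) x)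
          * (‖x‖ ^ 2 + ε) ^ (α / 2 - 1)
      + β * (α - 2) * (u x * inner ℝ (V x) x) * (ε * (‖x‖ ^ 2 + ε) ^ (α / 2 - 2))) = 0 := by
  set k : E n → ℝ := fun x => u x * ((‖x‖ ^ 2 + ε) ^ (α / 2 - 1) * inner ℝ (V x) x) with hk
  set Y : E n → E n := fun x => (u x * (‖x‖ ^ 2 + ε) ^ (α / 2)) • V x + (-β * k x) • x with hYdef
  have hkC : ContDiff ℝ 1 k := hu.mul ((contDiff_reg hε _).mul (hV.inner ℝ contDiff_id))
  have hY : ContDiff ℝ 1 Y :=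
    ((hu.mul (contDiff_reg hε _)).smul hV).add ((contDiff_const.mul hkC).smul contDiff_id)
  have hYc : HasCompactSupport Y := by
    refine hc.mono fun x hx => ?_
    rw [Function.mem_support] at hx ⊢
    contrapose! hx
    simp [hYdef, hk, hx]
  rw [← integral_trace_eq_zero hY hYc]
  congr 1; ext x
  change _ = tr (fderiv ℝ Y x)
  have du := (hu.differentiable one_ne_zero x).hasFDerivAt
  have dV := (hV.differentiable one_ne_zero x).hasFDerivAt
  have dk := du.mul ((hasFDerivAt_reg hε (α / 2 - 1) x).mul (dV.inner ℝ (hasFDerivAt_id x)))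
  have dY := ((du.mul (hasFDerivAt_reg hε (α / 2) x)).smul dV).add
    ((dk.const_mul (-β)).smul (hasFDerivAt_id x))
  have : HasFDerivAt Y _ x := dY
  rw [this.fderiv]
  simp only [tr_add, tr_smul, tr_smulRight, tr_id]
  have hs : 0 < ‖x‖ ^ 2 + ε := by positivity
  have e1 : (‖x‖ ^ 2 + ε) ^ (α / 2 - 1) = (‖x‖ ^ 2 + ε) * (‖x‖ ^ 2 + ε) ^ (α / 2 - 2) := by
    rw [show α / 2 - 1 = 1 + (α / 2 - 2) by ring, Real.rpow_add hs, Real.rpow_one]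
  have e2 : α / 2 - 1 - 1 = α / 2 - 2 := by ring
  simp only [Pi.mul_apply, e2, add_apply, smul_apply, smul_eq_mul,
    ContinuousLinearMap.comp_apply, fderivInnerCLM_apply, ContinuousLinearMap.prod_apply,
    ContinuousLinearMap.id_apply, innerSL_apply_apply, id, real_inner_self_eq_norm_sq]
  rw [real_inner_comm (V x) x, e1]
  linear_combination (u x * inner ℝ (V x) x * (‖x‖ ^ 2 + ε) * (‖x‖ ^ 2 + ε) ^ (α / 2 - 2)) * hβ

lemma locInt_rpow {n : ℕ} (hn : 1 ≤ n) {γ : ℝ} (hγ : -(n : ℝ) < γ) :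
    LocallyIntegrable (fun x : E n => ‖x‖ ^ γ) := by
  refine locallyIntegrable_of_norm_le_rpow (C := 1) (α := -γ) (by simpa using hn) ?_ ?_ ?_
  · simp only [finrank_euclideanSpace, Fintype.card_fin]; linarith
  · refine ae_of_all _ fun x => ?_
    rw [neg_neg, one_mul, Real.norm_of_nonneg (by positivity)]
  · exact (measurable_norm.pow_const γ).aestronglyMeasurable

lemma integrable_mul_rpow {n : ℕ} (hn : 1 ≤ n) {γ : ℝ} (hγ : -(n : ℝ) < γ) {f : E n → ℝ}
    (hf : Continuous f) (hc : HasCompactSupport f) :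
    Integrable (fun x : E n => f x * ‖x‖ ^ γ) := by
  simpa using (locInt_rpow hn hγ).integrable_smul_left_of_hasCompactSupport hf hc

/-- The bound, uniform in `ε`, for the regularized weights, covering both signs of `γ`. -/
lemma reg_le {s ε γ : ℝ} (hs : 0 < s) (hε : 0 < ε) (hε1 : ε ≤ 1) :
    (s ^ 2 + ε) ^ (γ / 2) ≤ s ^ γ + (s ^ 2 + 1) ^ (γ / 2) := by
  rcases le_total 0 γ with h | h
  · have : (s ^ 2 + ε) ^ (γ / 2) ≤ (s ^ 2 + 1) ^ (γ / 2) := by gcongr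
    have := Real.rpow_nonneg hs.le γ
    linarith
  · have h1 : (s ^ 2 + ε) ^ (γ / 2) ≤ (s ^ 2) ^ (γ / 2) :=
      Real.rpow_le_rpow_of_nonpos (by positivity) (by linarith) (by linarith)
    have h2 : (s ^ 2) ^ (γ / 2) = s ^ γ := by
      rw [← Real.rpow_natCast, ← Real.rpow_mul hs.le]; congr 1; push_cast; ring
    have : 0 ≤ (s ^ 2 + 1) ^ (γ / 2) := by positivity
    linarith

/-- The limit `ε → 0` of `identity_eps`. The error term is dominated by a multiple of `|x|^(α-1)`,
which is locally integrable because `n + α - 1 > 0`, and tends to zero pointwise. -/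
lemma identity_zero {n : ℕ} (hn : 1 ≤ n) {u : E n → ℝ} {V : E n → E n} (hu : ContDiff ℝ 1 u)
    (hV : ContDiff ℝ 1 V) (hc : HasCompactSupport u) {α β : ℝ} (hα : 0 < n + α - 1)
    (hβ : β * (n + α - 1) = α) :
    Integrable (fun x => (fderiv ℝ u x (V x) + u x * tr (fderiv ℝ V x)) * ‖x‖ ^ α
      - β * (fderiv ℝ u x x * inner ℝ (V x) x + u x * inner ℝ (fderiv ℝ V x x) x)
          * ‖x‖ ^ (α - 2)) ∧
    ∫ x, ((fderiv ℝ u x (V x) + u x * tr (fderiv ℝ V x)) * ‖x‖ ^ α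
      - β * (fderiv ℝ u x x * inner ℝ (V x) x + u x * inner ℝ (fderiv ℝ V x x) x)
          * ‖x‖ ^ (α - 2)) = 0 := by
  have cu := hu.continuous
  have cV := hV.continuous
  have cdu := hu.continuous_fderiv one_ne_zero
  have cdV := hV.continuous_fderiv one_ne_zero
  have ctr : Continuous fun x => tr (fderiv ℝ V x) := continuous_tr.comp cdV
  -- continuous compactly supported coefficients of the dominating function
  set a₁ : E n → ℝ := fun x => |fderiv ℝ u x (V x) + u x * tr (fderiv ℝ V x)|
    + |β| * (‖fderiv ℝ u x‖ * ‖V x‖ + |u x| * ‖fderiv ℝ V x‖) with ha₁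
  set a₂ : E n → ℝ := fun x => |β * (α - 2)| * (|u x| * ‖V x‖) with ha₂
  have c₁ : Continuous a₁ := by fun_prop
  have c₂ : Continuous a₂ := by fun_prop
  have out : ∀ x ∉ tsupport u, u x = 0 ∧ fderiv ℝ u x = 0 := fun x hx =>
    ⟨image_eq_zero_of_notMem_tsupport hx, by
      by_contra h; exact hx (support_fderiv_subset ℝ h)⟩
  have s₁ : HasCompactSupport a₁ := HasCompactSupport.intro hc fun x hx => by
    simp [ha₁, (out x hx).1, (out x hx).2]
  have s₂ : HasCompactSupport a₂ := HasCompactSupport.intro hc fun x hx => by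
    simp [ha₂, (out x hx).1]
  set bd : E n → ℝ := fun x => a₁ x * (‖x‖ ^ α + (‖x‖ ^ 2 + 1) ^ (α / 2))
    + a₂ x * (‖x‖ ^ (α - 1) + (‖x‖ ^ 2 + 1) ^ ((α - 1) / 2)) with hbd
  have cr : ∀ γ : ℝ, Continuous fun x : E n => (‖x‖ ^ 2 + 1) ^ γ := fun γ =>
    (contDiff_reg one_pos γ).continuous
  have ibd : Integrable bd := by
    have i1 := integrable_mul_rpow hn (γ := α) (by linarith) c₁ s₁
    have i2 := integrable_mul_rpow hn (γ := α - 1) (by linarith) c₂ s₂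
    have i3 : Integrable fun x => a₁ x * (‖x‖ ^ 2 + 1) ^ (α / 2) :=
      (c₁.mul (cr _)).integrable_of_hasCompactSupport s₁.mul_right
    have i4 : Integrable fun x => a₂ x * (‖x‖ ^ 2 + 1) ^ ((α - 1) / 2) :=
      (c₂.mul (cr _)).integrable_of_hasCompactSupport s₂.mul_right
    refine ((i1.add i3).add (i2.add i4)).congr (ae_of_all _ fun x => ?_)
    simp only [hbd, Pi.add_apply]; ring
  have hne : ∀ᵐ x : E n, x ≠ 0 := by
    have : Nontrivial (E n) := by
      apply Module.nontrivial_of_finrank_pos (R := ℝ)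
      simpa using Nat.lt_of_lt_of_le one_pos hn
    simp [ae_iff]
  set Fe : ℝ → E n → ℝ := fun ε x =>
      ((fderiv ℝ u x (V x) + u x * tr (fderiv ℝ V x)) * (‖x‖ ^ 2 + ε) ^ (α / 2)
      - β * (fderiv ℝ u x x * inner ℝ (V x) x + u x * inner ℝ (fderiv ℝ V x x) x)
          * (‖x‖ ^ 2 + ε) ^ (α / 2 - 1)
      + β * (α - 2) * (u x * inner ℝ (V x) x) * (ε * (‖x‖ ^ 2 + ε) ^ (α / 2 - 2))) with hFe
  have hbound : ∀ ε ∈ Ioc (0 : ℝ) 1, ∀ x : E n, x ≠ 0 → ‖Fe ε x‖ ≤ bd x := by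
    intro ε hε x hx
    have hx0 : 0 < ‖x‖ := norm_pos_iff.2 hx
    set s := ‖x‖ ^ 2 + ε with hs
    have hs0 : 0 < s := by have := hε.1; positivity
    have hxs : ‖x‖ ^ 2 ≤ s := by linarith [hε.1]
    have b1 := reg_le (γ := α) hx0 hε.1 hε.2
    have b2 := reg_le (γ := α - 1) hx0 hε.1 hε.2
    rw [← hs] at b1 b2
    have t1 : ‖x‖ ^ 2 * s ^ (α / 2 - 1) ≤ s ^ (α / 2) := by
      calc _ ≤ s * s ^ (α / 2 - 1) := by gcongr
        _ = s ^ (α / 2) := by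
            nth_rewrite 1 [← Real.rpow_one s]
            rw [← Real.rpow_add hs0]; ring_nf
    have p3 : 0 ≤ ε * s ^ (α / 2 - 2) := by have := hε.1; positivity
    have hεs : ε ≤ s := by nlinarith [sq_nonneg ‖x‖]
    have t2 : ‖x‖ * (ε * s ^ (α / 2 - 2)) ≤ s ^ ((α - 1) / 2) := by
      have : ‖x‖ ≤ s ^ (1 / 2 : ℝ) := by
        rw [← Real.sqrt_eq_rpow]; exact Real.le_sqrt_of_sq_le hxs
      calc _ ≤ s ^ (1 / 2 : ℝ) * (s * s ^ (α / 2 - 2)) := by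
            gcongr
        _ = s ^ ((α - 1) / 2) := by
            nth_rewrite 2 [← Real.rpow_one s]
            rw [← Real.rpow_add hs0, ← Real.rpow_add hs0]; ring_nf
    have u1 : |fderiv ℝ u x x * inner ℝ (V x) x + u x * inner ℝ (fderiv ℝ V x x) x|
        ≤ (‖fderiv ℝ u x‖ * ‖V x‖ + |u x| * ‖fderiv ℝ V x‖) * ‖x‖ ^ 2 := by
      have v1 : |fderiv ℝ u x x| ≤ ‖fderiv ℝ u x‖ * ‖x‖ := (fderiv ℝ u x).le_opNorm x
      have v2 : |inner ℝ (V x) x| ≤ ‖V x‖ * ‖x‖ := abs_real_inner_le_norm _ _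
      have v3 : |inner ℝ (fderiv ℝ V x x) x| ≤ (‖fderiv ℝ V x‖ * ‖x‖) * ‖x‖ :=
        (abs_real_inner_le_norm _ _).trans (by gcongr; exact (fderiv ℝ V x).le_opNorm x)
      calc _ ≤ |fderiv ℝ u x x| * |inner ℝ (V x) x| + |u x| * |inner ℝ (fderiv ℝ V x x) x| := by
            rw [← abs_mul, ← abs_mul]; exact abs_add_le _ _
        _ ≤ (‖fderiv ℝ u x‖ * ‖x‖) * (‖V x‖ * ‖x‖) + |u x| * ((‖fderiv ℝ V x‖ * ‖x‖) * ‖x‖) := by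
            gcongr
        _ = _ := by ring
    have u2 : |inner ℝ (V x) x| ≤ ‖V x‖ * ‖x‖ := abs_real_inner_le_norm _ _
    have p1 : 0 ≤ s ^ (α / 2) := by positivity
    have p2 : 0 ≤ s ^ (α / 2 - 1) := by positivity
    calc ‖Fe ε x‖ ≤ |fderiv ℝ u x (V x) + u x * tr (fderiv ℝ V x)| * s ^ (α / 2)
          + |β| * |fderiv ℝ u x x * inner ℝ (V x) x + u x * inner ℝ (fderiv ℝ V x x) x|
            * s ^ (α / 2 - 1)
          + |β * (α - 2)| * (|u x| * |inner ℝ (V x) x|) * (ε * s ^ (α / 2 - 2)) := by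
          rw [Real.norm_eq_abs]
          refine (abs_add_le _ _).trans (add_le_add ((abs_sub _ _).trans (add_le_add ?_ ?_)) ?_)
          · rw [abs_mul, abs_of_nonneg p1]
          · rw [abs_mul, abs_mul, abs_of_nonneg p2]
          · rw [abs_mul, abs_of_nonneg p3, abs_mul, abs_mul (u x)]
      _ ≤ |fderiv ℝ u x (V x) + u x * tr (fderiv ℝ V x)| * s ^ (α / 2)
          + |β| * ((‖fderiv ℝ u x‖ * ‖V x‖ + |u x| * ‖fderiv ℝ V x‖) * ‖x‖ ^ 2)
            * s ^ (α / 2 - 1)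
          + |β * (α - 2)| * (|u x| * (‖V x‖ * ‖x‖)) * (ε * s ^ (α / 2 - 2)) := by gcongr
      _ = |fderiv ℝ u x (V x) + u x * tr (fderiv ℝ V x)| * s ^ (α / 2)
          + |β| * (‖fderiv ℝ u x‖ * ‖V x‖ + |u x| * ‖fderiv ℝ V x‖)
            * (‖x‖ ^ 2 * s ^ (α / 2 - 1))
          + a₂ x * (‖x‖ * (ε * s ^ (α / 2 - 2))) := by simp only [ha₂]; ring
      _ ≤ |fderiv ℝ u x (V x) + u x * tr (fderiv ℝ V x)| * s ^ (α / 2)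
          + |β| * (‖fderiv ℝ u x‖ * ‖V x‖ + |u x| * ‖fderiv ℝ V x‖) * s ^ (α / 2)
          + a₂ x * s ^ ((α - 1) / 2) := by
          have : 0 ≤ a₂ x := by positivity
          gcongr
      _ = a₁ x * s ^ (α / 2) + a₂ x * s ^ ((α - 1) / 2) := by simp only [ha₁]; ring
      _ ≤ bd x := by
          have : 0 ≤ a₂ x := by positivity
          have : 0 ≤ a₁ x := by positivity
          simp only [hbd]
          gcongr
  have hlim : ∀ x : E n, x ≠ 0 → Tendsto (fun ε => Fe ε x) (nhdsWithin 0 (Ioi 0))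
      (nhds ((fderiv ℝ u x (V x) + u x * tr (fderiv ℝ V x)) * ‖x‖ ^ α
      - β * (fderiv ℝ u x x * inner ℝ (V x) x + u x * inner ℝ (fderiv ℝ V x x) x)
          * ‖x‖ ^ (α - 2))) := by
    intro x hx
    have hx0 : 0 < ‖x‖ := norm_pos_iff.2 hx
    have hr : ∀ γ : ℝ, ContinuousAt (fun ε : ℝ => (‖x‖ ^ 2 + ε) ^ γ) 0 := fun γ =>
      ContinuousAt.rpow_const (by fun_prop) (Or.inl (by positivity))
    have hcont : ContinuousAt (fun ε => Fe ε x) 0 := by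
      have h1 := hr (α / 2)
      have h2 := hr (α / 2 - 1)
      have h3 := hr (α / 2 - 2)
      simp only [hFe]
      fun_prop
    have e : ∀ γ : ℝ, (‖x‖ ^ 2) ^ γ = ‖x‖ ^ (2 * γ) := fun γ => by
      rw [← Real.rpow_natCast, ← Real.rpow_mul hx0.le]; norm_num
    have := hcont.tendsto.mono_left (nhdsWithin_le_nhds (s := Ioi 0))
    convert this using 2
    simp only [hFe, add_zero, e]
    ring_nf
  have hev : ∀ᶠ ε in nhdsWithin (0 : ℝ) (Ioi 0), ε ∈ Ioc (0 : ℝ) 1 :=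
    Ioc_mem_nhdsGT one_pos
  have hmeas : ∀ ε > 0, Continuous (Fe ε) := by
    intro ε hε
    have h1 : ∀ γ : ℝ, Continuous fun x : E n => (‖x‖ ^ 2 + ε) ^ γ := fun γ =>
      (contDiff_reg hε γ).continuous
    have h2 := h1 (α / 2)
    have h3 := h1 (α / 2 - 1)
    have h4 := h1 (α / 2 - 2)
    simp only [hFe]
    fun_prop
  constructor
  · refine ibd.mono' ?_ ?_
    · refine Measurable.aestronglyMeasurable ?_
      have m : ∀ γ : ℝ, Measurable fun x : E n => ‖x‖ ^ γ := fun γ => measurable_norm.pow_const γ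
      refine Measurable.sub (Measurable.mul ?_ (m _)) (Measurable.mul ?_ (m _))
      · exact Continuous.measurable (by fun_prop)
      · exact Continuous.measurable (by fun_prop)
    · filter_upwards [hne] with x hx
      refine le_of_tendsto (hlim x hx).norm ?_
      filter_upwards [hev] with ε hε using hbound ε hε x hx
  · have key := tendsto_integral_filter_of_dominated_convergence (μ := volume) bd
      (hev.mono fun ε hε => (hmeas ε hε.1).aestronglyMeasurable)
      (hev.mono fun ε hε => hne.mono fun x hx => hbound ε hε x hx) ibd
      (hne.mono fun x hx => hlim x hx)
    refine tendsto_nhds_unique key ?_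
    refine tendsto_const_nhds.congr' ?_
    filter_upwards [hev] with ε hε
    exact (identity_eps hu hV hc hε.1 hβ).symm

/-! ### The gradient and the Hessian -/

lemma inner_grad {n : ℕ} (u : E n → ℝ) (x y : E n) :
    inner ℝ (gradient u x) y = fderiv ℝ u x y := by
  rw [gradient, InnerProductSpace.toDual_symm_apply]

lemma contDiff_grad {n : ℕ} {u : E n → ℝ} (hu : ContDiff ℝ (⊤ : ℕ∞) u) :
    ContDiff ℝ 1 (gradient u) := by
  have h : ContDiff ℝ 1 (fderiv ℝ u) := hu.fderiv_right (by norm_cast)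
  exact (InnerProductSpace.toDual ℝ (E n)).symm.contDiff.comp h

lemma inner_fderiv_grad {n : ℕ} {u : E n → ℝ} (hu : ContDiff ℝ (⊤ : ℕ∞) u) (x h y : E n) :
    inner ℝ (fderiv ℝ (gradient u) x h) y = fderiv ℝ (fderiv ℝ u) x h y := by
  have h1 : ContDiff ℝ 1 (fderiv ℝ u) := hu.fderiv_right (by norm_cast)
  have d1 := ((h1.differentiable one_ne_zero x).hasFDerivAt).clm_apply (hasFDerivAt_const y x)
  have d2 := (((contDiff_grad hu).differentiable one_ne_zero x).hasFDerivAt).inner ℝ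
    (hasFDerivAt_const y x)
  have e : (fun x => inner ℝ (gradient u x) y) = fun x => fderiv ℝ u x y :=
    funext fun x => inner_grad u x y
  rw [e] at d2
  have := congrArg (fun L => L h) (d2.unique d1)
  simpa using this

lemma hessNormHS_nonneg {n : ℕ} (u : E n → ℝ) (x : E n) : 0 ≤ hessNormHS u x :=
  Real.sqrt_nonneg _

lemma norm_fderiv_grad_le {n : ℕ} {u : E n → ℝ} (hu : ContDiff ℝ (⊤ : ℕ∞) u) (x : E n) :
    ‖fderiv ℝ (gradient u) x‖ ≤ hessNormHS u x := by
  refine ContinuousLinearMap.opNorm_le_bound _ (hessNormHS_nonneg u x) fun h => ?_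
  refine abs_le_of_sq_le_sq' ?_ (by have := hessNormHS_nonneg u x; positivity) |>.2
  set D := fun i j => iteratedFDeriv ℝ 2 u x
    ![EuclideanSpace.single i (1:ℝ), EuclideanSpace.single j (1:ℝ)] with hD
  have hj : ∀ j, (fderiv ℝ (gradient u) x h) j = ∑ i, h i * D i j := by
    intro j
    have e1 : (fderiv ℝ (gradient u) x h) j
        = inner ℝ (fderiv ℝ (gradient u) x h) (EuclideanSpace.single j (1:ℝ)) := by
      rw [EuclideanSpace.inner_single_right]; simp
    have hh : h = ∑ i, h i • EuclideanSpace.single i (1 : ℝ) := by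
      ext j; simp [Finset.sum_apply, Pi.single_apply]
    rw [e1, inner_fderiv_grad hu]
    conv_lhs => rw [hh]
    simp [map_sum, hD, iteratedFDeriv_two_apply]
  rw [mul_pow, EuclideanSpace.norm_sq_eq, EuclideanSpace.norm_sq_eq, hessNormHS,
    Real.sq_sqrt (Finset.sum_nonneg fun i _ => Finset.sum_nonneg fun j _ => sq_nonneg _),
    Finset.sum_comm, Finset.sum_mul]
  refine Finset.sum_le_sum fun j _ => ?_
  simp only [Real.norm_eq_abs, sq_abs]
  rw [hj, mul_comm]
  exact Finset.sum_mul_sq_le_sq_mul_sq _ _ _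

lemma continuous_hessNormHS {n : ℕ} {u : E n → ℝ} (hu : ContDiff ℝ (⊤ : ℕ∞) u) :
    Continuous (hessNormHS u) := by
  have h1 : Continuous (iteratedFDeriv ℝ 2 u) := hu.continuous_iteratedFDeriv (by norm_cast)
  unfold hessNormHS
  fun_prop

lemma compactSupport_hess {n : ℕ} {u : E n → ℝ} (hc : HasCompactSupport u) :
    HasCompactSupport (hessNormHS u) :=
  HasCompactSupport.intro hc fun x hx => by
    have : iteratedFDeriv ℝ 2 u x = 0 := by
      by_contra h
      exact hx (support_iteratedFDeriv_subset 2 h)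
    simp [hessNormHS, this]

lemma compactSupport_grad {n : ℕ} {u : E n → ℝ} (hc : HasCompactSupport u) :
    HasCompactSupport (gradient u) :=
  (hc.fderiv (𝕜 := ℝ)).comp_left (g := (InnerProductSpace.toDual ℝ (E n)).symm) (map_zero _)

/-! ### Dimension at least two -/

lemma norm_sq_mul_rpow_le {s : ℝ} (hs : 0 ≤ s) (α : ℝ) : s ^ 2 * s ^ (α - 2) ≤ s ^ α := by
  rcases hs.eq_or_lt with rfl | hs
  · simp; positivity
  · rw [← Real.rpow_natCast, ← Real.rpow_add hs]; norm_num

/-- The estimate `(1 - β⁺) ∫ |∇u|^p |x|^α ≤ C ∫ |u| |∇u|^(p-2) |∇²u| |x|^α`. -/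
lemma energy {n : ℕ} (hn : 1 ≤ n) {α p β : ℝ} (hp : 2 ≤ p) (hα : 0 < n + α - 1)
    (hβ : β * (n + α - 1) = α) {u : E n → ℝ} (hu : ContDiff ℝ (⊤ : ℕ∞) u)
    (hc : HasCompactSupport u) :
    (1 - max β 0) * ∫ x, ‖gradient u x‖ ^ p * ‖x‖ ^ α ≤
      (n + |β|) * (p - 1) *
        ∫ x, |u x| * hessNormHS u x * ‖gradient u x‖ ^ (p - 2) * ‖x‖ ^ α := by
  have hG := contDiff_grad hu
  have hu1 : ContDiff ℝ 1 u := hu.of_le (by norm_cast)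
  have hV : ContDiff ℝ 1 (fun x => phi p (gradient u x)) := (contDiff_phi hp).comp hG
  have hVn : ∀ x, ‖fderiv ℝ (fun x => phi p (gradient u x)) x‖ ≤
      (p - 1) * ‖gradient u x‖ ^ (p - 2) * hessNormHS u x := by
    intro x
    have : fderiv ℝ (fun x => phi p (gradient u x)) x =
        (fderiv ℝ (phi p) (gradient u x)).comp (fderiv ℝ (gradient u) x) :=
      fderiv_comp x ((contDiff_phi hp).differentiable one_ne_zero _)
        (hG.differentiable one_ne_zero x)
    rw [this]
    refine (ContinuousLinearMap.opNorm_comp_le _ _).trans ?_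
    have h0 : 0 ≤ p - 1 := by linarith
    gcongr
    · exact norm_fderiv_phi_le hp _
    · exact norm_fderiv_grad_le hu x
  obtain ⟨hint, hid⟩ := identity_zero hn hu1 hV hc hα hβ
  set V := fun x => phi p (gradient u x) with hVdef
  have i1 : Integrable fun x => ‖gradient u x‖ ^ p * ‖x‖ ^ α :=
    integrable_mul_rpow hn (by linarith)
      (hG.continuous.norm.rpow_const fun _ => Or.inr (by linarith))
      ((compactSupport_grad hc).comp_left (g := fun v => ‖v‖ ^ p)
        (by rw [norm_zero, Real.zero_rpow (by linarith)]))
  have i2 : Integrable fun x =>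
      |u x| * hessNormHS u x * ‖gradient u x‖ ^ (p - 2) * ‖x‖ ^ α :=
    integrable_mul_rpow hn (by linarith)
      ((hu.continuous.abs.mul (continuous_hessNormHS hu)).mul
        (hG.continuous.norm.rpow_const fun _ => Or.inr (by linarith)))
      (HasCompactSupport.intro hc fun x hx => by
        simp [image_eq_zero_of_notMem_tsupport hx])
  rw [← integral_const_mul, ← integral_const_mul, ← sub_nonpos,
    ← integral_sub (i1.const_mul _) (i2.const_mul _)]
  refine (integral_mono ((i1.const_mul _).sub (i2.const_mul _)) hint fun x => ?_).trans hid.le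
  set w := ‖x‖ ^ α with hw
  set w₂ := ‖x‖ ^ (α - 2) with hw₂
  have hw0 : 0 ≤ w := by positivity
  have hw20 : 0 ≤ w₂ := by positivity
  have hww : ‖x‖ ^ 2 * w₂ ≤ w := norm_sq_mul_rpow_le (norm_nonneg x) α
  set g := gradient u x with hg
  set K := |u x| * ((p - 1) * ‖g‖ ^ (p - 2) * hessNormHS u x) with hK
  have hK0 : 0 ≤ K := by
    have := hessNormHS_nonneg u x
    have : 0 ≤ p - 1 := by linarith
    positivity
  have f1 : fderiv ℝ u x (V x) = ‖g‖ ^ p := by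
    rw [← inner_grad, hVdef, inner_phi hp]
  have f2 : |u x * tr (fderiv ℝ V x)| ≤ n * K := by
    rw [abs_mul, hK]
    calc _ ≤ |u x| * (n * ((p - 1) * ‖g‖ ^ (p - 2) * hessNormHS u x)) := by
          gcongr; exact (abs_tr_le _).trans (by gcongr; exact hVn x)
      _ = _ := by ring
  have f3 : |u x * inner ℝ (fderiv ℝ V x x) x| ≤ K * ‖x‖ ^ 2 := by
    rw [abs_mul, hK]
    calc _ ≤ |u x| * (((p - 1) * ‖g‖ ^ (p - 2) * hessNormHS u x) * ‖x‖ * ‖x‖) := by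
          gcongr
          refine (abs_real_inner_le_norm _ _).trans ?_
          gcongr
          exact ((fderiv ℝ V x).le_opNorm x).trans (by gcongr; exact hVn x)
      _ = _ := by ring
  -- the quadratic form of the radial derivative lies between `0` and `‖g‖ ^ p * ‖x‖ ^ 2`
  have f4 : fderiv ℝ u x x * inner ℝ (V x) x = ‖g‖ ^ (p - 2) * (inner ℝ g x) ^ 2 := by
    rw [← inner_grad, hVdef]
    simp only [phi, inner_smul_left, conj_trivial]
    ring
  have f5 : ‖g‖ ^ (p - 2) * (inner ℝ g x) ^ 2 ≤ ‖g‖ ^ p * ‖x‖ ^ 2 := by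
    have h1 : (inner ℝ g x) ^ 2 ≤ (‖g‖ * ‖x‖) ^ 2 := sq_le_sq'
      (by have := abs_le.1 (abs_real_inner_le_norm g x); linarith)
      (real_inner_le_norm g x)
    have h2 : ‖g‖ ^ (p - 2) * ‖g‖ ^ 2 = ‖g‖ ^ p := by
      rw [← Real.rpow_natCast, ← Real.rpow_add' (norm_nonneg _) (by push_cast; linarith)]
      norm_num
    calc _ ≤ ‖g‖ ^ (p - 2) * (‖g‖ * ‖x‖) ^ 2 := by gcongr
      _ = _ := by rw [← h2]; ring
  have f6 : 0 ≤ ‖g‖ ^ (p - 2) * (inner ℝ g x) ^ 2 := by positivity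
  rw [f1, f4]
  set Q := ‖g‖ ^ (p - 2) * (inner ℝ g x) ^ 2 with hQ
  set T := u x * inner ℝ (fderiv ℝ V x x) x with hT
  have r1 : β * Q * w₂ ≤ max β 0 * (‖g‖ ^ p * w) := by
    calc β * Q * w₂ ≤ max β 0 * Q * w₂ := by gcongr; exact le_max_left _ _
      _ ≤ max β 0 * (‖g‖ ^ p * ‖x‖ ^ 2) * w₂ := by gcongr
      _ = max β 0 * (‖g‖ ^ p * (‖x‖ ^ 2 * w₂)) := by ring
      _ ≤ _ := by gcongr
  have r2 : β * T * w₂ ≤ |β| * (K * w) := by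
    calc β * T * w₂ ≤ |β * T| * w₂ := by gcongr; exact le_abs_self _
      _ = |β| * |T| * w₂ := by rw [abs_mul]
      _ ≤ |β| * (K * ‖x‖ ^ 2) * w₂ := by gcongr
      _ = |β| * (K * (‖x‖ ^ 2 * w₂)) := by ring
      _ ≤ _ := by gcongr
  have r3 : -(n * K * w) ≤ u x * tr (fderiv ℝ V x) * w := by
    have := (abs_le.1 f2).1
    calc -(n * K * w) = -(n * K) * w := by ring
      _ ≤ _ := by gcongr
  have r4 : (n + |β|) * (p - 1) * (|u x| * hessNormHS u x * ‖g‖ ^ (p - 2) * w)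
      = (n + |β|) * (K * w) := by rw [hK]; ring
  change (1 - max β 0) * (‖g‖ ^ p * w) -
    (n + |β|) * (p - 1) * (|u x| * hessNormHS u x * ‖g‖ ^ (p - 2) * w) ≤ _
  rw [r4]
  linarith

lemma case_two {n : ℕ} (hn : 2 ≤ n) {q α p r : ℝ} (hq : 1 < q) (hα : 0 < n + α - 1)
    (hp : 2 ≤ p) (hr : 1 < r) (hpqr : 2 / p = 1 / q + 1 / r) :
    ∃ c > (0:ℝ), ∀ u : E n → ℝ, ContDiff ℝ (⊤ : ℕ∞) u → HasCompactSupport u →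
      (∫ x : E n, ‖gradient u x‖ ^ p * ‖x‖ ^ α) ^ (2 / p) ≤
        c * (∫ x : E n, hessNormHS u x ^ q * ‖x‖ ^ α) ^ (1 / q) *
          (∫ x : E n, |u x| ^ r * ‖x‖ ^ α) ^ (1 / r) := by
  have hn1 : 1 ≤ n := by lia
  have hn2 : (2 : ℝ) ≤ n := by exact_mod_cast hn
  set β := α / (n + α - 1) with hβdef
  have hβ : β * (n + α - 1) = α := div_mul_cancel₀ _ hα.ne'
  have hβ1 : β < 1 := by rw [hβdef, div_lt_one hα]; linarith
  have hκ : 0 < 1 - max β 0 := by simp [hβ1]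
  set C := (n + |β|) * (p - 1) / (1 - max β 0) with hC
  have hC0 : 0 < C := by
    have : 0 < p - 1 := by linarith
    positivity
  refine ⟨C, hC0, fun u hu hc => ?_⟩
  have hG := (contDiff_grad hu).continuous
  have hαn : -(n : ℝ) < α := by linarith
  have i1 : Integrable fun x => ‖gradient u x‖ ^ p * ‖x‖ ^ α :=
    integrable_mul_rpow hn1 hαn
      (hG.norm.rpow_const fun _ => Or.inr (by linarith))
      ((compactSupport_grad hc).comp_left (g := fun v => ‖v‖ ^ p)
        (by rw [norm_zero, Real.zero_rpow (by linarith)]))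
  have i2 : Integrable fun x => hessNormHS u x ^ q * ‖x‖ ^ α :=
    integrable_mul_rpow hn1 hαn
      ((continuous_hessNormHS hu).rpow_const fun _ => Or.inr (by linarith))
      ((compactSupport_hess hc).comp_left (g := fun v => v ^ q)
        (Real.zero_rpow (by linarith)))
  have i3 : Integrable fun x => |u x| ^ r * ‖x‖ ^ α :=
    integrable_mul_rpow hn1 hαn
      (hu.continuous.abs.rpow_const fun _ => Or.inr (by linarith))
      (hc.comp_left (g := fun v => |v| ^ r)
        (by rw [abs_zero, Real.zero_rpow (by linarith)]))
  have n2 : ∀ x, 0 ≤ hessNormHS u x ^ q * ‖x‖ ^ α := fun x => by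
    have := hessNormHS_nonneg u x; positivity
  have n1 : ∀ x, 0 ≤ ‖gradient u x‖ ^ p * ‖x‖ ^ α := fun x => by positivity
  have n3 : ∀ x, 0 ≤ |u x| ^ r * ‖x‖ ^ α := fun x => by positivity
  have hsum : 1 / q + 1 / r + (p - 2) / p = 1 := by rw [← hpqr]; field_simp; ring
  have hc0 : 0 ≤ (p - 2) / p := div_nonneg (by linarith) (by linarith)
  obtain ⟨-, hol⟩ := holder3 i2 i3 i1 n2 n3 n1 (a := 1 / q) (b := 1 / r) (c := (p - 2) / p)
    (by positivity) (by positivity) hc0 hsum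
  have en := energy hn1 hp hα hβ hu hc
  have e : (∫ x, |u x| * hessNormHS u x * ‖gradient u x‖ ^ (p - 2) * ‖x‖ ^ α) =
      ∫ x, (hessNormHS u x ^ q * ‖x‖ ^ α) ^ (1 / q) * (|u x| ^ r * ‖x‖ ^ α) ^ (1 / r) *
        (‖gradient u x‖ ^ p * ‖x‖ ^ α) ^ ((p - 2) / p) := by
    congr 1; ext x
    have hH := hessNormHS_nonneg u x
    have hw : (0 : ℝ) ≤ ‖x‖ ^ α := by positivity
    rw [Real.mul_rpow (by positivity) hw, Real.mul_rpow (by positivity) hw,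
      Real.mul_rpow (by positivity) hw, ← Real.rpow_mul hH, ← Real.rpow_mul (abs_nonneg _),
      ← Real.rpow_mul (norm_nonneg (gradient u x)), mul_one_div_cancel (by positivity),
      mul_one_div_cancel (by positivity), mul_div_cancel₀ _ (by positivity), Real.rpow_one,
      Real.rpow_one]
    have hw1 : (‖x‖ ^ α) ^ (1 / q) * (‖x‖ ^ α) ^ (1 / r) * (‖x‖ ^ α) ^ ((p - 2) / p)
        = ‖x‖ ^ α := by
      rw [← Real.rpow_add_of_nonneg hw (by positivity) (by positivity),
        ← Real.rpow_add_of_nonneg hw (by positivity) hc0, hsum, Real.rpow_one]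
    nth_rewrite 1 [← hw1]
    ring
  rw [e] at en
  set I := ∫ x, ‖gradient u x‖ ^ p * ‖x‖ ^ α with hI
  set A := (∫ x : E n, hessNormHS u x ^ q * ‖x‖ ^ α) ^ (1 / q) with hA
  set B := (∫ x : E n, |u x| ^ r * ‖x‖ ^ α) ^ (1 / r) with hB
  have hI0 : 0 ≤ I := integral_nonneg (f := fun x => ‖gradient u x‖ ^ p * ‖x‖ ^ α) n1
  have hA0 : 0 ≤ A := Real.rpow_nonneg (integral_nonneg n2) _
  have hB0 : 0 ≤ B := Real.rpow_nonneg (integral_nonneg n3) _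
  refine absorb hp hI0 (by positivity) ?_
  have h0 : 0 ≤ (n + |β|) * (p - 1) := mul_nonneg (by positivity) (by linarith)
  have := en.trans (mul_le_mul_of_nonneg_left hol h0)
  rw [hC, div_mul_eq_mul_div, div_mul_eq_mul_div, div_mul_eq_mul_div, le_div_iff₀ hκ]
  linarith

/-! ### The half-line inequality without weight -/

lemma integrableOn_rpow_of_support {f : ℝ → ℝ} (hf : Continuous f) (hc : HasCompactSupport f)
    {s : ℝ} (hs : 0 < s) : Integrable fun x => |f x| ^ s :=
  (hf.abs.rpow_const fun _ => Or.inr hs.le).integrable_of_hasCompactSupport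
    (hc.comp_left (g := fun v => |v| ^ s) (by rw [abs_zero, Real.zero_rpow hs.ne']))

/-- Integration by parts on the half-line followed by Hölder's inequality. The boundary term
`g 0 * phi p (g' 0)` has no sign. -/
lemma half_line_boundary {q p r : ℝ} (hq : 1 < q) (hp : 2 ≤ p) (hr : 1 < r)
    (hpqr : 2 / p = 1 / q + 1 / r) {g : ℝ → ℝ} (hg : ContDiff ℝ 2 g)
    (hc : HasCompactSupport g) :
    (∫ x in Ioi (0 : ℝ), |deriv g x| ^ p) + g 0 * phi p (deriv g 0) ≤
      (p - 1) * ((∫ x in Ioi (0 : ℝ), |deriv (deriv g) x| ^ q) ^ (1 / q) *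
        (∫ x in Ioi (0 : ℝ), |g x| ^ r) ^ (1 / r) *
        (∫ x in Ioi (0 : ℝ), |deriv g x| ^ p) ^ ((p - 2) / p)) := by
  have hg1 : ContDiff ℝ 1 (deriv g) := ((contDiff_succ_iff_deriv (n := 1)).1 hg).2.2
  have hg2 : Continuous (deriv (deriv g)) := hg1.continuous_deriv_one
  have hW : ContDiff ℝ 1 (fun x => phi p (deriv g x)) := (contDiff_phi hp).comp hg1
  have hWd : ∀ x, |deriv (fun x => phi p (deriv g x)) x| ≤
      (p - 1) * |deriv g x| ^ (p - 2) * |deriv (deriv g) x| := by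
    intro x
    have h1 : HasDerivAt (fun x => phi p (deriv g x))
        (fderiv ℝ (phi p) (deriv g x) (deriv (deriv g) x)) x :=
      (((contDiff_phi hp).differentiable one_ne_zero _).hasFDerivAt).comp_hasDerivAt x
        (hg1.differentiable one_ne_zero x).hasDerivAt
    rw [h1.deriv, ← Real.norm_eq_abs]
    refine (ContinuousLinearMap.le_opNorm _ _).trans ?_
    have := norm_fderiv_phi_le hp (deriv g x)
    simp only [Real.norm_eq_abs] at *
    gcongr
  have hF : ∀ x, HasDerivAt (fun x => g x * phi p (deriv g x))
      (deriv g x * phi p (deriv g x) + g x * deriv (fun x => phi p (deriv g x)) x) x := fun x =>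
    (hg.differentiable two_ne_zero x).hasDerivAt.mul (hW.differentiable one_ne_zero x).hasDerivAt
  have hFc : HasCompactSupport (fun x => g x * phi p (deriv g x)) := hc.mul_right
  have e0 : ∀ x, deriv g x * phi p (deriv g x) = |deriv g x| ^ p := by
    intro x
    have := inner_phi hp (deriv g x)
    rw [← Real.norm_eq_abs, ← this]
    simp [mul_comm]
  have i1 := integrableOn_rpow_of_support hg1.continuous hc.deriv (s := p) (by linarith)
  have i2 := integrableOn_rpow_of_support hg2 hc.deriv.deriv (s := q) (by linarith)
  have i3 := integrableOn_rpow_of_support hg.continuous hc (s := r) (by linarith)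
  have i4 : Integrable fun x => g x * deriv (fun x => phi p (deriv g x)) x :=
    (hg.continuous.mul hW.continuous_deriv_one).integrable_of_hasCompactSupport hc.mul_right
  have ibp : (∫ x in Ioi (0 : ℝ), |deriv g x| ^ p) + g 0 * phi p (deriv g 0) =
      -∫ x in Ioi (0 : ℝ), g x * deriv (fun x => phi p (deriv g x)) x := by
    simp_rw [e0] at hF
    have := integral_Ioi_of_hasDerivAt_of_tendsto' (a := 0) (fun x _ => hF x)
      (i1.add i4).integrableOn
      ((hFc.is_zero_at_infty).mono_left atTop_le_cocompact)
    rw [integral_add i1.integrableOn i4.integrableOn] at this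
    linarith
  have hsum : 1 / q + 1 / r + (p - 2) / p = 1 := by rw [← hpqr]; field_simp; ring
  have hc0 : 0 ≤ (p - 2) / p := div_nonneg (by linarith) (by linarith)
  have hp1 : 0 ≤ p - 1 := by linarith
  obtain ⟨hi, hol⟩ := holder3 (μ := volume.restrict (Ioi (0 : ℝ)))
    i2.integrableOn i3.integrableOn i1.integrableOn
    (fun x => by positivity) (fun x => by positivity) (fun x => by positivity)
    (a := 1 / q) (b := 1 / r) (c := (p - 2) / p) (by positivity) (by positivity) hc0 hsum
  rw [ibp]
  refine le_trans ?_ (mul_le_mul_of_nonneg_left hol hp1)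
  rw [← integral_neg, ← integral_const_mul]
  refine integral_mono i4.integrableOn.neg (hi.const_mul _) fun x => ?_
  refine (neg_le_abs _).trans ?_
  rw [abs_mul]
  refine (mul_le_mul_of_nonneg_left (hWd x) (abs_nonneg _)).trans (le_of_eq ?_)
  rw [← Real.rpow_mul (abs_nonneg _), ← Real.rpow_mul (abs_nonneg _),
    ← Real.rpow_mul (abs_nonneg _), mul_one_div_cancel (by positivity),
    mul_one_div_cancel (by positivity), mul_div_cancel₀ _ (by positivity), Real.rpow_one,
    Real.rpow_one]
  ring

lemma integral_rpow_dilate {f w : ℝ → ℝ} (hf : Continuous f) (hc : HasCompactSupport f)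
    {s : ℝ} (hs : 0 < s) (h : ∀ x, |w x| ≤ 8 * |f x| + 8 * |f (2 * x)|) :
    ∫ x in Ioi (0 : ℝ), |w x| ^ s ≤ 2 * 16 ^ s * ∫ x in Ioi (0 : ℝ), |f x| ^ s := by
  have i1 := integrableOn_rpow_of_support hf hc hs
  have i2 : IntegrableOn (fun x => |f (2 * x)| ^ s) (Ioi 0) := by
    have := (integrableOn_Ioi_comp_mul_left_iff (fun x => |f x| ^ s) 0 (a := 2) (by norm_num)).2
      i1.integrableOn
    exact this
  have e : ∫ x in Ioi (0 : ℝ), |f (2 * x)| ^ s = 2⁻¹ * ∫ x in Ioi (0 : ℝ), |f x| ^ s := by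
    have := integral_comp_mul_left_Ioi (fun x => |f x| ^ s) 0 (b := 2) (by norm_num)
    simpa using this
  have hb : ∀ x, |w x| ^ s ≤ 16 ^ s * (|f x| ^ s + |f (2 * x)| ^ s) := by
    intro x
    have h1 : |w x| ≤ 16 * max |f x| |f (2 * x)| := by
      have := h x
      have := le_max_left |f x| |f (2 * x)|
      have := le_max_right |f x| |f (2 * x)|
      linarith
    calc |w x| ^ s ≤ (16 * max |f x| |f (2 * x)|) ^ s := by gcongr
      _ = 16 ^ s * (max |f x| |f (2 * x)|) ^ s := by
        rw [Real.mul_rpow (by norm_num) (by positivity)]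
      _ ≤ _ := by
        gcongr
        have := Real.rpow_nonneg (abs_nonneg (f x)) s
        have := Real.rpow_nonneg (abs_nonneg (f (2 * x))) s
        rcases max_choice |f x| |f (2 * x)| with h | h <;> rw [h] <;> linarith
  have i3 : IntegrableOn (fun x => 16 ^ s * (|f x| ^ s + |f (2 * x)| ^ s)) (Ioi 0) :=
    (i1.integrableOn.add i2).const_mul _
  have hpos : 0 ≤ ∫ x in Ioi (0 : ℝ), |f x| ^ s := integral_nonneg fun x => by positivity
  calc ∫ x in Ioi (0 : ℝ), |w x| ^ s
      ≤ ∫ x in Ioi (0 : ℝ), 16 ^ s * (|f x| ^ s + |f (2 * x)| ^ s) := by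
        refine integral_mono_of_nonneg (ae_of_all _ fun x => by positivity) i3 (ae_of_all _ hb)
    _ = 16 ^ s * ((3 / 2) * ∫ x in Ioi (0 : ℝ), |f x| ^ s) := by
        rw [integral_const_mul, integral_add i1.integrableOn i2, e]; ring
    _ ≤ _ := by
        have : (0:ℝ) ≤ 16 ^ s := by positivity
        nlinarith [mul_nonneg this hpos]

/-- The Gagliardo–Nirenberg inequality on the half-line for functions that need not vanish at the
endpoint. Adding `half_line_boundary` for `g` and for `v x = 3 * g x - 2 * g (2 * x)`, which
satisfies `v 0 = g 0` and `v' 0 = -g' 0`, removes the boundary terms. -/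
lemma half_line {q p r : ℝ} (hq : 1 < q) (hp : 2 ≤ p) (hr : 1 < r)
    (hpqr : 2 / p = 1 / q + 1 / r) :
    ∃ C > (0 : ℝ), ∀ g : ℝ → ℝ, ContDiff ℝ 2 g → HasCompactSupport g →
      ∫ x in Ioi (0 : ℝ), |deriv g x| ^ p ≤
        C * ((∫ x in Ioi (0 : ℝ), |deriv (deriv g) x| ^ q) ^ (p / (2 * q)) *
        (∫ x in Ioi (0 : ℝ), |g x| ^ r) ^ (p / (2 * r))) := by
  set K : ℝ := (p - 1) * (1 + (2 * 16 ^ q) ^ (1 / q) * (2 * 16 ^ r) ^ (1 / r)) with hK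
  have hp1 : 0 < p - 1 := by linarith
  have hK0 : 0 < K := by positivity
  refine ⟨K ^ (p / 2), by positivity, fun g hg hc => ?_⟩
  have hg1 : ContDiff ℝ 1 (deriv g) := ((contDiff_succ_iff_deriv (n := 1)).1 hg).2.2
  have hg2 : Continuous (deriv (deriv g)) := hg1.continuous_deriv_one
  set v : ℝ → ℝ := fun x => 3 * g x - 2 * g (2 * x) with hv
  have dil : ∀ {f : ℝ → ℝ} {f' : ℝ} (x : ℝ), HasDerivAt f f' (2 * x) →
      HasDerivAt (fun x => f (2 * x)) (f' * 2) x := fun x hf =>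
    hf.comp x (by simpa using (hasDerivAt_id x).const_mul 2)
  have v1 : deriv v = fun x => 3 * deriv g x - 4 * deriv g (2 * x) := by
    ext x
    have h1 := (hg.differentiable two_ne_zero x).hasDerivAt
    have h2 := dil x (hg.differentiable two_ne_zero (2 * x)).hasDerivAt
    refine ((h1.const_mul 3).sub (h2.const_mul 2)).deriv.trans ?_
    ring
  have v2 : deriv (deriv v) = fun x => 3 * deriv (deriv g) x - 8 * deriv (deriv g) (2 * x) := by
    rw [v1]
    ext x
    have h1 := (hg1.differentiable one_ne_zero x).hasDerivAt
    have h2 := dil x (hg1.differentiable one_ne_zero (2 * x)).hasDerivAt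
    refine ((h1.const_mul 3).sub (h2.const_mul 4)).deriv.trans ?_
    ring
  have hvC : ContDiff ℝ 2 v :=
    (contDiff_const.mul hg).sub (contDiff_const.mul (hg.comp (contDiff_const.mul contDiff_id)))
  have hvc : HasCompactSupport v := by
    have h2 : HasCompactSupport (fun x => g (2 * x)) :=
      hc.comp_homeomorph (Homeomorph.mulLeft₀ 2 two_ne_zero)
    exact (hc.mul_left (f := fun _ => 3)).sub (h2.mul_left (f := fun _ => 2))
  have Av := integral_rpow_dilate (w := deriv (deriv v)) hg2 hc.deriv.deriv
    (s := q) (by linarith) (fun x => by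
      rw [v2]
      refine (abs_sub _ _).trans ?_
      rw [abs_mul, abs_mul, abs_of_pos (by norm_num : (0 : ℝ) < 3),
        abs_of_pos (by norm_num : (0 : ℝ) < 8)]
      gcongr; norm_num)
  have Bv := integral_rpow_dilate (w := v) hg.continuous hc (s := r)
    (by linarith) (fun x => by
      refine (abs_sub _ _).trans ?_
      rw [abs_mul, abs_mul, abs_of_pos (by norm_num : (0 : ℝ) < 3),
        abs_of_pos (by norm_num : (0 : ℝ) < 2)]
      gcongr <;> norm_num)
  have b1 := half_line_boundary hq hp hr hpqr hg hc
  have b2 := half_line_boundary hq hp hr hpqr hvC hvc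
  have bc : v 0 * phi p (deriv v 0) = -(g 0 * phi p (deriv g 0)) := by
    have e1 : v 0 = g 0 := by simp [hv]; ring
    have e2 : deriv v 0 = -deriv g 0 := by rw [v1]; simp; ring
    rw [e1, e2]; simp [phi]
  rw [bc] at b2
  have nn : ∀ (f : ℝ → ℝ) (s : ℝ), 0 ≤ ∫ x in Ioi (0 : ℝ), |f x| ^ s := fun f s =>
    integral_nonneg fun x => by positivity
  have nA := nn (deriv (deriv g)) q
  have nB := nn g r
  have nI := nn (deriv g) p
  have nAv := nn (deriv (deriv v)) q
  have nBv := nn v r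
  have nIv := nn (deriv v) p
  set A := ∫ x in Ioi (0 : ℝ), |deriv (deriv g) x| ^ q
  set B := ∫ x in Ioi (0 : ℝ), |g x| ^ r
  set I := ∫ x in Ioi (0 : ℝ), |deriv g x| ^ p
  set A' := ∫ x in Ioi (0 : ℝ), |deriv (deriv v) x| ^ q
  set B' := ∫ x in Ioi (0 : ℝ), |v x| ^ r
  set I' := ∫ x in Ioi (0 : ℝ), |deriv v x| ^ p
  have hc0 : 0 ≤ (p - 2) / p := div_nonneg (by linarith) (by linarith)
  have m1 : A' ^ (1 / q) ≤ (2 * 16 ^ q) ^ (1 / q) * A ^ (1 / q) := by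
    rw [← Real.mul_rpow (by positivity) nA]; gcongr
  have m2 : B' ^ (1 / r) ≤ (2 * 16 ^ r) ^ (1 / r) * B ^ (1 / r) := by
    rw [← Real.mul_rpow (by positivity) nB]; gcongr
  have m3 : I ^ ((p - 2) / p) ≤ (I + I') ^ ((p - 2) / p) := by gcongr; linarith
  have m4 : I' ^ ((p - 2) / p) ≤ (I + I') ^ ((p - 2) / p) := by gcongr; linarith
  have m5 : I + I' ≤ (K * (A ^ (1 / q) * B ^ (1 / r))) * (I + I') ^ ((p - 2) / p) := by
    have t1 : A ^ (1 / q) * B ^ (1 / r) * I ^ ((p - 2) / p) ≤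
      A ^ (1 / q) * B ^ (1 / r) * (I + I') ^ ((p - 2) / p) := by gcongr
    have t2 : A' ^ (1 / q) * B' ^ (1 / r) * I' ^ ((p - 2) / p) ≤
      ((2 * 16 ^ q) ^ (1 / q) * A ^ (1 / q)) * ((2 * 16 ^ r) ^ (1 / r) * B ^ (1 / r)) *
        (I + I') ^ ((p - 2) / p) := by gcongr
    have t1' := mul_le_mul_of_nonneg_left t1 hp1.le
    have t2' := mul_le_mul_of_nonneg_left t2 hp1.le
    rw [hK]
    linarith
  have m6 := absorb hp (by positivity) (by positivity) m5
  have hp2 : 0 < p / 2 := by linarith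
  calc I ≤ I + I' := by linarith
    _ = ((I + I') ^ (2 / p)) ^ (p / 2) := by
      rw [← Real.rpow_mul (by positivity)]
      have : 2 / p * (p / 2) = 1 := by field_simp
      rw [this, Real.rpow_one]
    _ ≤ (K * (A ^ (1 / q) * B ^ (1 / r))) ^ (p / 2) := by gcongr
    _ = _ := by
      have x1 : 1 / q * (p / 2) = p / (2 * q) := by field_simp
      have x2 : 1 / r * (p / 2) = p / (2 * r) := by field_simp
      rw [Real.mul_rpow hK0.le (by positivity),
        Real.mul_rpow (x := A ^ (1 / q)) (by positivity) (by positivity),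
        ← Real.rpow_mul nA, ← Real.rpow_mul nB, x1, x2]

/-! ### The weighted inequality on the line -/

lemma integral_shift (f : ℝ → ℝ) (t : ℝ) :
    ∫ y in Ioi (0 : ℝ), f (t + y) = ∫ x in Ioi t, f x := by
  have := (measurePreserving_add_left volume t).setIntegral_preimage_emb
    (measurableEmbedding_addLeft t) f (Ioi t)
  rw [← this]
  congr 2
  ext; simp

/-- Layer-cake representation of the weight `x ^ α`, `α > 0`: it turns a weighted integral over
the half-line into a superposition of unweighted integrals over the half-lines `(t, ∞)`. -/
lemma layer_cake {α : ℝ} (hα : 0 < α) {f : ℝ → ℝ} (hf : Continuous f)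
    (hc : HasCompactSupport f) :
    IntegrableOn (fun t => α * t ^ (α - 1) * ∫ y in Ioi (0 : ℝ), f (t + y)) (Ioi 0) ∧
    ∫ x in Ioi (0 : ℝ), f x * x ^ α =
      ∫ t in Ioi (0 : ℝ), α * t ^ (α - 1) * ∫ y in Ioi (0 : ℝ), f (t + y) := by
  have hfi : Integrable f := hf.integrable_of_hasCompactSupport hc
  set H : ℝ → ℝ := fun t => ∫ y in Ioi (0 : ℝ), f (t + y) with hH
  have H1 : H = fun t => (∫ x in Ioi (0 : ℝ), f x) - ∫ x in (0 : ℝ)..t, f x := by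
    ext t
    rw [hH]
    simp only
    rw [integral_shift, ← intervalIntegral.integral_interval_add_Ioi (a := 0) (b := t)
      hfi.integrableOn hfi.integrableOn]
    ring
  have Hd : ∀ t, HasDerivAt H (-f t) t := by
    intro t
    rw [H1]
    exact (intervalIntegral.integral_hasDerivAt_right (hf.intervalIntegrable _ _)
      (hf.stronglyMeasurableAtFilter _ _) hf.continuousAt).const_sub _
  have Hc : Continuous H := continuous_iff_continuousAt.2 fun t => (Hd t).continuousAt
  obtain ⟨R, hR0, hR⟩ : ∃ R > (0 : ℝ), ∀ x, R ≤ x → f x = 0 := by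
    obtain ⟨R, hR⟩ := hc.isCompact.isBounded.subset_closedBall 0
    refine ⟨max R 0 + 1, by positivity, fun x hx => ?_⟩
    by_contra h
    have h1 := hR (subset_tsupport f h)
    rw [mem_closedBall_zero_iff, Real.norm_eq_abs] at h1
    have := le_abs_self x
    have := le_max_left R 0
    linarith
  have HR : ∀ t, R ≤ t → H t = 0 := by
    intro t ht
    rw [hH]
    refine setIntegral_eq_zero_of_forall_eq_zero fun y hy => hR _ ?_
    have : 0 < y := hy
    linarith
  have int1 : IntegrableOn (fun t => α * t ^ (α - 1) * H t) (Ioi 0) := by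
    have h1 : IntegrableOn (fun t : ℝ => α * t ^ (α - 1)) (Icc 0 R) := by
      have := intervalIntegral.intervalIntegrable_rpow' (a := 0) (b := R) (r := α - 1)
        (by linarith)
      rw [intervalIntegrable_iff_integrableOn_Icc_of_le hR0.le] at this
      exact this.const_mul α
    have h2 := h1.mul_continuousOn Hc.continuousOn isCompact_Icc
    refine (h2.mono_set Ioc_subset_Icc_self).of_forall_sdiff_eq_zero measurableSet_Ioi ?_
    intro t ht
    have : R ≤ t := by
      by_contra h
      exact ht.2 ⟨ht.1, by linarith⟩
    rw [HR t this, mul_zero]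
  have int2 : IntegrableOn (fun x => f x * x ^ α) (Ioi 0) :=
    ((hf.mul (continuous_id.rpow_const fun _ => Or.inr hα.le)).integrable_of_hasCompactSupport
      hc.mul_right).integrableOn
  refine ⟨int1, ?_⟩
  have hder : ∀ t ∈ Ioi (0 : ℝ), HasDerivAt (fun t => t ^ α * H t)
      (α * t ^ (α - 1) * H t - f t * t ^ α) t := by
    intro t ht
    have := (Real.hasDerivAt_rpow_const (p := α) (Or.inl (ne_of_gt ht))).mul (Hd t)
    convert! this using 1
    ring
  have := integral_Ioi_of_hasDerivAt_of_tendsto (a := 0) (m := 0)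
    (((continuous_id.rpow_const fun _ => Or.inr hα.le).mul Hc).continuousWithinAt) hder
    (int1.sub int2)
    (tendsto_const_nhds.congr' (by
      filter_upwards [eventually_ge_atTop R] with t ht
      simp [HR t ht]))
  rw [integral_sub int1 int2] at this
  simp only [id, Pi.mul_apply, Real.zero_rpow hα.ne', zero_mul, sub_zero] at this
  exact (sub_eq_zero.1 this).symm

/-- The half-line inequality with the weight `x ^ α`: `half_line` is applied to all the
translates of `g`, and the layer-cake representation and Hölder's inequality recombine them. -/
lemma half_line_weight {q p r α : ℝ} (hq : 1 < q) (hp : 2 ≤ p) (hr : 1 < r)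
    (hpqr : 2 / p = 1 / q + 1 / r) (hα : 0 < α) :
    ∃ C > (0 : ℝ), ∀ g : ℝ → ℝ, ContDiff ℝ 2 g → HasCompactSupport g →
      ∫ x in Ioi (0 : ℝ), |deriv g x| ^ p * x ^ α ≤
        C * ((∫ x in Ioi (0 : ℝ), |deriv (deriv g) x| ^ q * x ^ α) ^ (p / (2 * q)) *
        (∫ x in Ioi (0 : ℝ), |g x| ^ r * x ^ α) ^ (p / (2 * r))) := by
  obtain ⟨C, hC, hGN⟩ := half_line hq hp hr hpqr
  refine ⟨C, hC, fun g hg hc => ?_⟩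
  have hg1 : ContDiff ℝ 1 (deriv g) := ((contDiff_succ_iff_deriv (n := 1)).1 hg).2.2
  have hg2 : Continuous (deriv (deriv g)) := hg1.continuous_deriv_one
  have lc : ∀ {f : ℝ → ℝ} {s : ℝ}, Continuous f → HasCompactSupport f → 0 < s →
      IntegrableOn (fun t => α * t ^ (α - 1) * ∫ y in Ioi (0 : ℝ), |f (t + y)| ^ s) (Ioi 0) ∧
      ∫ x in Ioi (0 : ℝ), |f x| ^ s * x ^ α =
        ∫ t in Ioi (0 : ℝ), α * t ^ (α - 1) * ∫ y in Ioi (0 : ℝ), |f (t + y)| ^ s :=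
    fun {f s} hf hfc hs => layer_cake hα (f := fun x => |f x| ^ s)
      (hf.abs.rpow_const fun _ => Or.inr hs.le)
      (hfc.comp_left (g := fun v => |v| ^ s) (by rw [abs_zero, Real.zero_rpow hs.ne']))
  obtain ⟨i1, e1⟩ := lc hg1.continuous hc.deriv (s := p) (by linarith)
  obtain ⟨i2, e2⟩ := lc hg2 hc.deriv.deriv (s := q) (by linarith)
  obtain ⟨i3, e3⟩ := lc hg.continuous hc (s := r) (by linarith)
  rw [e1, e2, e3]
  have hab : p / (2 * q) + p / (2 * r) = 1 := by
    have : p / (2 * q) + p / (2 * r) = p / 2 * (1 / q + 1 / r) := by field_simp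
    rw [this, ← hpqr]; field_simp
  -- the absolute value makes the weight nonnegative on the whole line
  have nn : ∀ (f : ℝ → ℝ) (s t : ℝ), 0 ≤ |α * t ^ (α - 1) * ∫ y in Ioi (0 : ℝ), |f (t + y)| ^ s| :=
    fun f s t => abs_nonneg _
  have hst : ∀ (f : ℝ → ℝ) (s : ℝ), ∀ t ∈ Ioi (0 : ℝ),
      |α * t ^ (α - 1) * ∫ y in Ioi (0 : ℝ), |f (t + y)| ^ s| =
        α * t ^ (α - 1) * ∫ y in Ioi (0 : ℝ), |f (t + y)| ^ s := fun f s t ht => by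
    have ht : 0 < t := ht
    have : 0 ≤ ∫ y in Ioi (0 : ℝ), |f (t + y)| ^ s := integral_nonneg fun x => by positivity
    exact abs_of_nonneg (by positivity)
  obtain ⟨hi, hol⟩ := holder3 (μ := volume.restrict (Ioi (0 : ℝ)))
    i2.abs i3.abs i3.abs (nn _ _) (nn _ _) (nn _ _)
    (a := p / (2 * q)) (b := p / (2 * r)) (c := 0) (by positivity) (by positivity) le_rfl
    (by rw [hab, add_zero])
  simp only [Real.rpow_zero, mul_one] at hi hol
  rw [setIntegral_congr_fun measurableSet_Ioi (hst _ q),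
    setIntegral_congr_fun measurableSet_Ioi (hst _ r)] at hol
  refine le_trans ?_ (mul_le_mul_of_nonneg_left hol hC.le)
  rw [← integral_const_mul]
  refine setIntegral_mono_on i1 (hi.const_mul C) measurableSet_Ioi fun t ht => ?_
  rw [hst _ _ t ht, hst _ _ t ht]
  have ht : 0 < t := ht
  have hd : ∀ f : ℝ → ℝ, deriv (fun y => f (t + y)) = fun y => deriv f (t + y) := by
    intro f; ext y; exact deriv_comp_const_add f t y
  have key := hGN (fun y => g (t + y)) (hg.comp (contDiff_const.add contDiff_id))
    (hc.comp_homeomorph (Homeomorph.addLeft t))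
  rw [hd g, hd (deriv g)] at key
  have nq : 0 ≤ ∫ y in Ioi (0 : ℝ), |deriv (deriv g) (t + y)| ^ q :=
    integral_nonneg fun x => by positivity
  have nr : 0 ≤ ∫ y in Ioi (0 : ℝ), |g (t + y)| ^ r := integral_nonneg fun x => by positivity
  set w := α * t ^ (α - 1) with hw
  have hw0 : 0 < w := by positivity
  rw [Real.mul_rpow hw0.le nq, Real.mul_rpow hw0.le nr]
  have hww : w ^ (p / (2 * q)) * w ^ (p / (2 * r)) = w := by
    rw [← Real.rpow_add hw0, hab, Real.rpow_one]
  refine (mul_le_mul_of_nonneg_left key hw0.le).trans (le_of_eq ?_)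
  nth_rewrite 1 [← hww]
  ring

lemma integral_split {α : ℝ} (hα : 0 < α) {f : ℝ → ℝ} (hf : Continuous f)
    (hc : HasCompactSupport f) :
    ∫ x, f x * |x| ^ α =
      (∫ x in Ioi (0 : ℝ), f (-x) * x ^ α) + ∫ x in Ioi (0 : ℝ), f x * x ^ α := by
  have hi : Integrable fun x => f x * |x| ^ α :=
    (hf.mul (continuous_abs.rpow_const fun _ => Or.inr hα.le)).integrable_of_hasCompactSupport
      hc.mul_right
  rw [← intervalIntegral.integral_Iic_add_Ioi (b := 0) hi.integrableOn hi.integrableOn]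
  congr 1
  · have := integral_comp_neg_Ioi 0 (fun x => f x * |x| ^ α)
    rw [neg_zero] at this
    rw [← this]
    refine setIntegral_congr_fun measurableSet_Ioi fun x hx => ?_
    simp only [abs_neg, abs_of_pos (show 0 < x from hx)]
  · refine setIntegral_congr_fun measurableSet_Ioi fun x hx => ?_
    simp only [abs_of_pos (show 0 < x from hx)]

lemma line_weight {q p r α : ℝ} (hq : 1 < q) (hp : 2 ≤ p) (hr : 1 < r)
    (hpqr : 2 / p = 1 / q + 1 / r) (hα : 0 < α) :
    ∃ C > (0 : ℝ), ∀ g : ℝ → ℝ, ContDiff ℝ 2 g → HasCompactSupport g →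
      (∫ x, |deriv g x| ^ p * |x| ^ α) ^ (2 / p) ≤
        C * (∫ x, |deriv (deriv g) x| ^ q * |x| ^ α) ^ (1 / q) *
        (∫ x, |g x| ^ r * |x| ^ α) ^ (1 / r) := by
  obtain ⟨C, hC, hW⟩ := half_line_weight hq hp hr hpqr hα
  refine ⟨(2 * C) ^ (2 / p), by positivity, fun g hg hc => ?_⟩
  have hg1 : ContDiff ℝ 1 (deriv g) := ((contDiff_succ_iff_deriv (n := 1)).1 hg).2.2
  have hg2 : Continuous (deriv (deriv g)) := hg1.continuous_deriv_one
  have sp : ∀ {f : ℝ → ℝ} {s : ℝ}, Continuous f → HasCompactSupport f → 0 < s →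
      ∫ x, |f x| ^ s * |x| ^ α = (∫ x in Ioi (0 : ℝ), |f (-x)| ^ s * x ^ α) +
        ∫ x in Ioi (0 : ℝ), |f x| ^ s * x ^ α :=
    fun {f s} hf hfc hs => integral_split hα (f := fun x => |f x| ^ s)
      (hf.abs.rpow_const fun _ => Or.inr hs.le)
      (hfc.comp_left (g := fun v => |v| ^ s) (by rw [abs_zero, Real.zero_rpow hs.ne']))
  rw [sp hg1.continuous hc.deriv (s := p) (by linarith),
    sp hg2 hc.deriv.deriv (s := q) (by linarith), sp hg.continuous hc (s := r) (by linarith)]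
  have k1 := hW g hg hc
  have k2 := hW (fun x => g (-x)) (hg.comp contDiff_neg) (hc.comp_homeomorph (Homeomorph.neg ℝ))
  have d1 : deriv (fun x => g (-x)) = fun x => -deriv g (-x) := by
    ext x; exact deriv_comp_neg g x
  have d2 : deriv (fun x => -deriv g (-x)) = fun x => deriv (deriv g) (-x) := by
    ext x
    rw [deriv.fun_neg, deriv_comp_neg, neg_neg]
  rw [d1, d2] at k2
  simp only [abs_neg] at k2
  have nn : ∀ (f : ℝ → ℝ) (s : ℝ), 0 ≤ ∫ x in Ioi (0 : ℝ), |f x| ^ s * x ^ α := fun f s =>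
    setIntegral_nonneg measurableSet_Ioi fun x hx => by
      have : 0 < x := hx
      positivity
  have n1 := nn (deriv g) p
  have n2 := nn (deriv (deriv g)) q
  have n3 := nn g r
  have n4 := nn (fun x => deriv g (-x)) p
  have n5 := nn (fun x => deriv (deriv g) (-x)) q
  have n6 := nn (fun x => g (-x)) r
  set I := ∫ x in Ioi (0 : ℝ), |deriv g x| ^ p * x ^ α
  set A := ∫ x in Ioi (0 : ℝ), |deriv (deriv g) x| ^ q * x ^ α
  set B := ∫ x in Ioi (0 : ℝ), |g x| ^ r * x ^ α
  set I' := ∫ x in Ioi (0 : ℝ), |deriv g (-x)| ^ p * x ^ α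
  set A' := ∫ x in Ioi (0 : ℝ), |deriv (deriv g) (-x)| ^ q * x ^ α
  set B' := ∫ x in Ioi (0 : ℝ), |g (-x)| ^ r * x ^ α
  have hsum : I' + I ≤ 2 * C * ((A' + A) ^ (p / (2 * q)) * (B' + B) ^ (p / (2 * r))) := by
    have t1 : A ^ (p / (2 * q)) * B ^ (p / (2 * r)) ≤
      (A' + A) ^ (p / (2 * q)) * (B' + B) ^ (p / (2 * r)) := by gcongr <;> linarith
    have t2 : A' ^ (p / (2 * q)) * B' ^ (p / (2 * r)) ≤
      (A' + A) ^ (p / (2 * q)) * (B' + B) ^ (p / (2 * r)) := by gcongr <;> linarith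
    have := mul_le_mul_of_nonneg_left t1 hC.le
    have := mul_le_mul_of_nonneg_left t2 hC.le
    linarith
  calc (I' + I) ^ (2 / p)
      ≤ (2 * C * ((A' + A) ^ (p / (2 * q)) * (B' + B) ^ (p / (2 * r)))) ^ (2 / p) := by gcongr
    _ = _ := by
      have x1 : p / (2 * q) * (2 / p) = 1 / q := by field_simp
      have x2 : p / (2 * r) * (2 / p) = 1 / r := by field_simp
      rw [Real.mul_rpow (by positivity) (by positivity),
        Real.mul_rpow (x := (A' + A) ^ (p / (2 * q))) (by positivity) (by positivity),
        ← Real.rpow_mul (by positivity), ← Real.rpow_mul (by positivity), x1, x2, mul_assoc]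

/-! ### Dimension one -/

lemma case_one {q α p r : ℝ} (hq : 1 < q) (hα : 0 < α)
    (hp : 2 ≤ p) (hr : 1 < r) (hpqr : 2 / p = 1 / q + 1 / r) :
    ∃ c > (0:ℝ), ∀ u : E 1 → ℝ, ContDiff ℝ (⊤ : ℕ∞) u → HasCompactSupport u →
      (∫ x : E 1, ‖gradient u x‖ ^ p * ‖x‖ ^ α) ^ (2 / p) ≤
        c * (∫ x : E 1, hessNormHS u x ^ q * ‖x‖ ^ α) ^ (1 / q) *
          (∫ x : E 1, |u x| ^ r * ‖x‖ ^ α) ^ (1 / r) := by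
  obtain ⟨C, hC, hW⟩ := line_weight hq hp hr hpqr hα
  refine ⟨C, hC, fun u hu hc => ?_⟩
  set e : E 1 := EuclideanSpace.single 0 (1 : ℝ) with he
  have he1 : ‖e‖ = 1 := by simp [he]
  set L : ℝ ≃ₗᵢ[ℝ] E 1 := (LinearIsometry.toSpanSingleton ℝ (E 1) he1).toLinearIsometryEquiv
    (by simp) with hL
  have hLt : ∀ t, L t = t • e := fun t => rfl
  have tr : ∀ f : E 1 → ℝ, ∫ x, f x = ∫ t : ℝ, f (L t) := fun f =>
    (L.measurePreserving.integral_comp L.toHomeomorph.measurableEmbedding f).symm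
  set g : ℝ → ℝ := fun t => u (L t) with hg
  have hLd : ∀ t, HasDerivAt (fun t => L t) e t := by
    intro t
    simpa [hLt] using (hasDerivAt_id t).smul_const e
  have hu2 : ContDiff ℝ 2 u := mod_cast contDiff_infty.1 hu 2
  have hu1 : ContDiff ℝ 1 (fderiv ℝ u) := hu2.fderiv_right (by norm_num)
  have g1 : deriv g = fun t => fderiv ℝ u (L t) e := by
    ext t
    exact ((hu2.differentiable two_ne_zero (L t)).hasFDerivAt.comp_hasDerivAt t (hLd t)).deriv
  have g2 : deriv (deriv g) = fun t => fderiv ℝ (fderiv ℝ u) (L t) e e := by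
    rw [g1]
    ext t
    have h1 := (hu1.differentiable one_ne_zero (L t)).hasFDerivAt.comp_hasDerivAt t (hLd t)
    exact (h1.clm_apply (hasDerivAt_const t e)).deriv.trans (by simp)
  have n1 : ∀ t, ‖gradient u (L t)‖ = |deriv g t| := by
    intro t
    rw [g1]
    simp only
    rw [← inner_grad]
    obtain ⟨s, hs⟩ := L.surjective (gradient u (L t))
    rw [← hs, L.norm_map, hLt s, inner_smul_left, real_inner_self_eq_norm_sq, he1]
    simp
  have n2 : ∀ t, hessNormHS u (L t) = |deriv (deriv g) t| := by
    intro t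
    rw [g2, hessNormHS]
    simp [iteratedFDeriv_two_apply, Real.sqrt_sq_eq_abs, ← he]
  have n3 : ∀ t, ‖L t‖ = |t| := fun t => by rw [L.norm_map, Real.norm_eq_abs]
  rw [tr, tr (fun x => hessNormHS u x ^ q * ‖x‖ ^ α), tr (fun x => |u x| ^ r * ‖x‖ ^ α)]
  simp only [n1, n2, n3]
  exact hW g (hu2.comp L.contDiff) (hc.comp_homeomorph L.toHomeomorph)

/-! ### The theorem -/

/-- Theorem 4.10(i): Gagliardo–Nirenberg inequality on `ℝⁿ` with the power weight
`|x|^α`, in the `L^p` scale. -/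
theorem statement16 {n : ℕ} (q α : ℝ) (hq : 1 < q)
    (hα : 1 / q + (α - 1) / (n : ℝ) > 0)
    (p r : ℝ) (hp : 2 ≤ p) (hr : 1 < r) (hpqr : 2 / p = 1 / q + 1 / r) :
    ∃ c > (0:ℝ), ∀ u : E n → ℝ, ContDiff ℝ (⊤ : ℕ∞) u → HasCompactSupport u →
      (∫ x : E n, ‖gradient u x‖ ^ p * ‖x‖ ^ α) ^ (2 / p) ≤
        c * (∫ x : E n, hessNormHS u x ^ q * ‖x‖ ^ α) ^ (1 / q) *
          (∫ x : E n, |u x| ^ r * ‖x‖ ^ α) ^ (1 / r) := by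
  have hq1 : 1 / q < 1 := by rw [div_lt_one (by linarith)]; exact hq
  rcases Nat.lt_or_ge n 2 with hn | hn
  · interval_cases n
    · -- the gradient on a space with a single point is zero
      refine ⟨1, one_pos, fun u _ _ => ?_⟩
      have hz : ∀ x : E 0, ‖gradient u x‖ ^ p * ‖x‖ ^ α = 0 := fun x => by
        rw [Subsingleton.elim (gradient u x) 0, norm_zero, Real.zero_rpow (by linarith), zero_mul]
      simp only [hz, integral_zero]
      rw [Real.zero_rpow (by positivity)]
      have h1 : 0 ≤ ∫ x : E 0, hessNormHS u x ^ q * ‖x‖ ^ α := integral_nonneg fun x => by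
        have := hessNormHS_nonneg u x
        positivity
      have h2 : 0 ≤ ∫ x : E 0, |u x| ^ r * ‖x‖ ^ α := integral_nonneg fun x => by positivity
      positivity
    · refine case_one hq ?_ hp hr hpqr
      norm_num at hα hq1
      linarith
  · refine case_two hn hq ?_ hp hr hpqr
    have hn0 : (2 : ℝ) ≤ n := by exact_mod_cast hn
    have h1 := mul_pos hα (by linarith : (0 : ℝ) < n)
    rw [add_mul, div_mul_cancel₀ _ (by linarith : (n : ℝ) ≠ 0)] at h1
    nlinarith
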